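/- arXiv:2311.04136 — 5 statements merged into one kernel-verified Lean document; each statement's English description precedes it below -/
import Mathlib

section
/- Let S = K[x_1,…,x_n] be a polynomial ring over a field K of prime characteristic p and let q = p^e be a power of p. Then for any ideals I, J ⊆ S, (I ∩ J)^{[q]} = I^{[q]} ∩ J^{[q]}. -/
open MvPolynomial

attribute [local instance] MvPolynomial.gradedAlgebra

noncomputable section

variable {K : Type*} [Field K] {n : ℕ}

/-- The `q`-th Frobenius power `I^{[q]}` of an ideal. -/
def frobPow (I : Ideal (MvPolynomial (Fin n) K)) (q : ℕ) : Ideal (MvPolynomial (Fin n) K) :=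
  Ideal.span ((fun a => a ^ q) '' (I : Set (MvPolynomial (Fin n) K)))

/-- The associated primes of `S/I`. -/
def Ass (I : Ideal (MvPolynomial (Fin n) K)) : Set (Ideal (MvPolynomial (Fin n) K)) :=
  associatedPrimes (MvPolynomial (Fin n) K) (MvPolynomial (Fin n) K ⧸ I)

/-- The v-number of a graded ideal. -/
def vnum (I : Ideal (MvPolynomial (Fin n) K)) : ℕ :=
  sInf {d : ℕ | ∃ f : MvPolynomial (Fin n) K, f.IsHomogeneous d ∧
    ∃ 𝔭 ∈ Ass I, I.colon (Ideal.span {f}) = 𝔭}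

/-- The local v-number `v_𝔭(I)`. -/
def vnumLocal (I 𝔭 : Ideal (MvPolynomial (Fin n) K)) : ℕ :=
  sInf {d : ℕ | ∃ f : MvPolynomial (Fin n) K, f.IsHomogeneous d ∧
    I.colon (Ideal.span {f}) = 𝔭}

/-- The invariant `α_q(I)`. -/
def alphaq (I : Ideal (MvPolynomial (Fin n) K)) (q : ℕ) : ℕ :=
  sInf {d : ℕ | ∃ f : MvPolynomial (Fin n) K, f.IsHomogeneous d ∧
    f ∈ (frobPow I q).colon I ∧ f ∉ frobPow I q}

/-- The height of an ideal: the minimal height of an associated prime. -/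
def heightI (I : Ideal (MvPolynomial (Fin n) K)) : ℕ :=
  sInf {h : ℕ | ∃ 𝔭 ∈ Ass I, ∃ h𝔭 : 𝔭.IsPrime,
    Order.height (⟨𝔭, h𝔭⟩ : PrimeSpectrum (MvPolynomial (Fin n) K)) = (h : ℕ∞)}

/-- The big height of an ideal: the maximal height of an associated prime. -/
def bightI (I : Ideal (MvPolynomial (Fin n) K)) : ℕ :=
  sSup {h : ℕ | ∃ 𝔭 ∈ Ass I, ∃ h𝔭 : 𝔭.IsPrime,
    Order.height (⟨𝔭, h𝔭⟩ : PrimeSpectrum (MvPolynomial (Fin n) K)) = (h : ℕ∞)}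

/-- A graded (homogeneous) ideal with respect to the standard grading. -/
def IsGraded (I : Ideal (MvPolynomial (Fin n) K)) : Prop :=
  Ideal.IsHomogeneous (homogeneousSubmodule (Fin n) K) I

/-- A monomial ideal. -/
def IsMonomialIdeal (I : Ideal (MvPolynomial (Fin n) K)) : Prop :=
  ∃ s : Set (Fin n →₀ ℕ), I = Ideal.span ((fun a => monomial a (1 : K)) '' s)

/-- Ideal extension commutes with intersections when there are enough dual functionals. -/
theorem map_inf_of_dual {R A ι : Type*} [CommRing R] [CommRing A] (F : R →+* A)
    (φ : ι → (A →+ R)) (h1 : ∀ i a f, φ i (F a * f) = a * φ i f)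
    (h2 : ∀ f, f ∈ Ideal.span (Set.range fun i => F (φ i f))) (I J : Ideal R) :
    (I ⊓ J).map F = I.map F ⊓ J.map F := by
  have key : ∀ (I : Ideal R) (f : A), f ∈ I.map F → ∀ i, φ i f ∈ I := by
    intro I f hf i
    rw [Ideal.map] at hf
    induction hf using Submodule.span_induction with
    | mem x hx =>
      obtain ⟨a, ha, rfl⟩ := hx
      have := h1 i a 1
      rw [mul_one] at this
      rw [this]
      exact I.mul_mem_right _ ha
    | zero => simp
    | add x y _ _ hx hy => rw [map_add]; exact I.add_mem hx hy
    | smul a x hx hx' =>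
      clear hx'
      revert a
      induction hx using Submodule.span_induction with
      | mem x hx =>
        obtain ⟨b, hb, rfl⟩ := hx
        intro a
        rw [smul_eq_mul, mul_comm, h1]
        exact I.mul_mem_right _ hb
      | zero => simp
      | add x y _ _ hx hy =>
        intro a
        rw [smul_add, map_add]; exact I.add_mem (hx a) (hy a)
      | smul c x _ hx => intro a; rw [smul_smul]; exact hx _
  apply le_antisymm (Ideal.map_inf_le F)
  intro f hf
  refine (Ideal.span_le.2 ?_) (h2 f)
  rintro _ ⟨i, rfl⟩
  exact Ideal.mem_map_of_mem F ⟨key I f hf.1 i, key J f hf.2 i⟩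

theorem map_inf_of_free {R A : Type*} [CommRing R] [CommRing A] [Algebra R A] [Module.Free R A]
    (I J : Ideal R) :
    (I ⊓ J).map (algebraMap R A) = I.map (algebraMap R A) ⊓ J.map (algebraMap R A) := by
  let b := Module.Free.chooseBasis R A
  refine map_inf_of_dual (algebraMap R A) (fun i => (b.coord i).toAddMonoidHom) ?_ ?_ I J
  · intro i a f
    simp [← Algebra.smul_def]
  · intro f
    suffices h : Finsupp.linearCombination R b (b.repr f) ∈
      Ideal.span (Set.range fun i => algebraMap R A (b.repr f i)) by
      rwa [b.linearCombination_repr f] at h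
    rw [Finsupp.linearCombination_apply, Finsupp.sum]
    refine Ideal.sum_mem _ fun i _ => ?_
    rw [Algebra.smul_def]
    apply Ideal.mul_mem_right
    apply Ideal.subset_span
    exact ⟨i, rfl⟩

attribute [local instance] MvPolynomial.algebraMvPolynomial in
theorem map_inf_coeff' {L K σ : Type*} [Field L] [Field K] [Algebra L K]
    (I J : Ideal (MvPolynomial σ L)) :
    (I ⊓ J).map (MvPolynomial.map (algebraMap L K)) =
      I.map (MvPolynomial.map (algebraMap L K)) ⊓ J.map (MvPolynomial.map (algebraMap L K)) := by
  have h : Algebra.IsPushout L (MvPolynomial σ L) K (MvPolynomial σ K) := inferInstance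
  have : Module.Free (MvPolynomial σ L) (MvPolynomial σ K) := h.out.free
  exact map_inf_of_free (A := MvPolynomial σ K) I J

theorem map_inf_coeff {L K σ : Type*} [Field L] [Field K] (s : L →+* K)
    (I J : Ideal (MvPolynomial σ L)) :
    (I ⊓ J).map (MvPolynomial.map s) =
      I.map (MvPolynomial.map s) ⊓ J.map (MvPolynomial.map s) := by
  letI := s.toAlgebra
  exact map_inf_coeff' I J

/-- The component of a polynomial on exponents congruent to `r` mod `q`, contracted. -/
def expandCoord {K : Type*} [Field K] {n : ℕ} (q : ℕ) (r : Fin n → Fin q) :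
    MvPolynomial (Fin n) K →ₗ[K] MvPolynomial (Fin n) K :=
  (basisMonomials (Fin n) K).constr K (fun d =>
    if ∀ i, d i % q = r i then monomial (d.mapRange (· / q) (Nat.zero_div q)) 1 else 0)

theorem expandCoord_monomial {K : Type*} [Field K] {n : ℕ} (q : ℕ) (r : Fin n → Fin q)
    (d : Fin n →₀ ℕ) (c : K) : expandCoord q r (monomial d c) =
    if ∀ i, d i % q = r i then monomial (d.mapRange (· / q) (Nat.zero_div q)) c else 0 := by
  have : monomial d c = c • basisMonomials (Fin n) K d := by simp [smul_monomial]
  rw [this, map_smul, expandCoord, Module.Basis.constr_basis]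
  split_ifs <;> simp [smul_monomial]

theorem map_inf_expand {K : Type*} [Field K] {n : ℕ} (q : ℕ) (hq : 0 < q)
    (I J : Ideal (MvPolynomial (Fin n) K)) :
    (I ⊓ J).map (expand q : MvPolynomial (Fin n) K →ₐ[K] _).toRingHom =
      I.map (expand q : MvPolynomial (Fin n) K →ₐ[K] _).toRingHom ⊓
      J.map (expand q : MvPolynomial (Fin n) K →ₐ[K] _).toRingHom := by
  refine map_inf_of_dual _ (fun r : Fin n → Fin q => (expandCoord q r).toAddMonoidHom) ?_ ?_ I J
  · intro r a f
    change expandCoord q r (expand q a * f) = a * expandCoord q r f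
    induction a using MvPolynomial.induction_on' with
    | add a b ha hb => simp only [map_add, add_mul, ha, hb]
    | monomial d c =>
      induction f using MvPolynomial.induction_on' with
      | add a b ha hb => simp only [map_add, mul_add, ha, hb]
      | monomial e c' =>
        rw [expand_monomial, monomial_mul, expandCoord_monomial, expandCoord_monomial]
        simp only [Finsupp.add_apply, Finsupp.smul_apply, smul_eq_mul, Nat.mul_add_mod]
        split_ifs
        · rw [monomial_mul]
          congr 2
          ext i
          simp [Nat.mul_add_div hq]
        · simp
  · intro f
    have : f = ∑ r : Fin n → Fin q, expand q (expandCoord q r f) *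
        monomial (Finsupp.equivFunOnFinite.symm fun i => (r i : ℕ)) 1 := by
      induction f using MvPolynomial.induction_on' with
      | add a b ha hb =>
        simp only [map_add, add_mul, Finset.sum_add_distrib]
        rw [← ha, ← hb]
      | monomial d c =>
        rw [Finset.sum_eq_single (fun i => ⟨d i % q, Nat.mod_lt _ hq⟩)]
        · rw [expandCoord_monomial, if_pos (fun i => rfl), expand_monomial, monomial_mul, mul_one]
          congr 2
          ext i
          simp [Nat.div_add_mod]
        · intro r _ hr
          rw [expandCoord_monomial, if_neg, map_zero, zero_mul]
          intro h
          exact hr (funext fun i => Fin.ext (h i).symm)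
        · simp
    suffices h : (∑ r : Fin n → Fin q, expand q (expandCoord q r f) *
        monomial (Finsupp.equivFunOnFinite.symm fun i => (r i : ℕ)) 1) ∈
        Ideal.span (Set.range fun r : Fin n → Fin q => expand q (expandCoord q r f)) by
      rwa [← this] at h
    refine Ideal.sum_mem _ fun r _ => ?_
    apply Ideal.mul_mem_right
    apply Ideal.subset_span
    exact ⟨r, rfl⟩

theorem stmt2 {K : Type*} [Field K] {n : ℕ} (p : ℕ) (hp : p.Prime) [CharP K p]
    (q : ℕ) (hq : ∃ e : ℕ, q = p ^ e) (I J : Ideal (MvPolynomial (Fin n) K)) :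
    frobPow (I ⊓ J) q = frobPow I q ⊓ frobPow J q := by
  obtain ⟨e, rfl⟩ := hq
  haveI : ExpChar K p := ExpChar.prime hp
  have h : ∀ I : Ideal (MvPolynomial (Fin n) K), frobPow I (p ^ e) =
      (I.map (expand (p ^ e) : MvPolynomial (Fin n) K →ₐ[K] _).toRingHom).map
        (MvPolynomial.map (iterateFrobenius K p e)) := by
    intro I
    rw [Ideal.map_map, Ideal.map, frobPow]
    congr 1
    refine Set.image_congr fun a _ => ?_
    exact (map_iterateFrobenius_expand p a e).symm
  rw [h, h, h, map_inf_expand _ (pow_pos hp.pos e), map_inf_coeff]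

end
end

section
/- Let S = K[x_1,…,x_n] be a standard graded polynomial ring over a field K of prime characteristic p, and let I ⊆ S be an ideal generated by K-linearly independent linear forms l_1,…,l_m. Then for all q = p^e > 1, v(I^{[q]}) = α_q(I) = (q−1)·m = (q−1)·height(I). -/
open MvPolynomial

attribute [local instance] MvPolynomial.gradedAlgebra

noncomputable section

variable {K : Type*} [Field K] {n : ℕ}

theorem X_mem_I0 {s : Finset (Fin n)} {f : MvPolynomial (Fin n) K} :
    f ∈ Ideal.span (X '' (s : Set (Fin n)) : Set (MvPolynomial (Fin n) K)) ↔
      ∀ a ∈ f.support, ∃ i ∈ s, a i ≠ 0 := by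
  rw [mem_ideal_span_X_image]; simp

theorem X_prime (s : Finset (Fin n)) :
    (Ideal.span (X '' (s : Set (Fin n)) : Set (MvPolynomial (Fin n) K))).IsPrime := by
  classical
  set I0 := Ideal.span (X '' (s : Set (Fin n)) : Set (MvPolynomial (Fin n) K)) with hI0
  let φ : MvPolynomial (Fin n) K →ₐ[K] MvPolynomial (Fin n) K :=
    aeval (fun i => if i ∈ s then 0 else X i)
  have h1 : (Ideal.Quotient.mkₐ K I0).comp φ = Ideal.Quotient.mkₐ K I0 := by
    ext i
    by_cases hi : i ∈ s
    · have : (X i : MvPolynomial (Fin n) K) ∈ I0 := Ideal.subset_span ⟨i, hi, rfl⟩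
      simp [φ, hi, Ideal.Quotient.eq_zero_iff_mem.mpr this]
    · simp [φ, hi]
  have h2 : I0 = RingHom.ker φ := by
    apply le_antisymm
    · rw [hI0, Ideal.span_le]
      rintro _ ⟨i, hi, rfl⟩
      have : i ∈ s := hi
      simp [φ, this]
    · intro f hf
      have := DFunLike.congr_fun h1 f
      rw [AlgHom.comp_apply, (RingHom.mem_ker).1 hf, map_zero] at this
      exact Ideal.Quotient.eq_zero_iff_mem.mp this.symm
  rw [h2]
  exact RingHom.ker_isPrime _

theorem X_height_ge (s : Finset (Fin n)) :
    (s.card : ℕ∞) ≤ (Ideal.span (X '' (s : Set (Fin n)) : Set (MvPolynomial (Fin n) K))).height := by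
  classical
  induction s using Finset.induction_on with
  | empty => simp
  | insert a s ha ih =>
    have := X_prime (K := K) s
    have := X_prime (K := K) (insert a s)
    rw [Finset.card_insert_of_notMem ha]
    push_cast
    refine le_trans (add_le_add_left ih 1) ?_
    have hlt : Ideal.span (X '' (s : Set (Fin n)) : Set (MvPolynomial (Fin n) K)) <
        Ideal.span (X '' ((insert a s : Finset (Fin n)) : Set (Fin n))) := by
      refine lt_of_le_of_ne (Ideal.span_mono (Set.image_mono (by simp))) ?_
      intro h
      have h1 : (X a : MvPolynomial (Fin n) K) ∈
          Ideal.span (X '' ((insert a s : Finset (Fin n)) : Set (Fin n))) :=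
        Ideal.subset_span ⟨a, by simp, rfl⟩
      rw [← h, X_mem_I0] at h1
      obtain ⟨i, hi, h2⟩ := h1 (Finsupp.single a 1) (by simp [support_X])
      rw [Finsupp.single_apply_ne_zero] at h2
      exact ha (h2.1 ▸ hi)
    simpa using Ideal.height_add_one_le_of_lt_of_isPrime hlt

theorem X_height (s : Finset (Fin n)) :
    (Ideal.span (X '' (s : Set (Fin n)) : Set (MvPolynomial (Fin n) K))).height = s.card := by
  classical
  apply le_antisymm _ (X_height_ge s)
  have := X_prime (K := K) s
  have h := Ideal.height_le_card_of_mem_minimalPrimes_span_finset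
    (p := Ideal.span (X '' (s : Set (Fin n)) : Set (MvPolynomial (Fin n) K)))
    (s := s.image X) (by
      rw [Finset.coe_image, Ideal.minimalPrimes_eq_subsingleton_self]; rfl)
  exact h.trans (by exact_mod_cast Finset.card_image_le)

theorem frobPow_eq_map (p e : ℕ) [hp : Fact p.Prime] [CharP K p]
    (I : Ideal (MvPolynomial (Fin n) K)) :
    frobPow I (p ^ e) = I.map (iterateFrobenius (MvPolynomial (Fin n) K) p e) := by
  unfold frobPow Ideal.map
  congr 1

theorem frobPow_map (p e : ℕ) [hp : Fact p.Prime] [CharP K p]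
    (φ : MvPolynomial (Fin n) K ≃+* MvPolynomial (Fin n) K)
    (I : Ideal (MvPolynomial (Fin n) K)) :
    frobPow (I.map φ) (p ^ e) = (frobPow I (p ^ e)).map φ := by
  rw [frobPow_eq_map, frobPow_eq_map]
  apply le_antisymm
  · rw [Ideal.map_le_iff_le_comap, Ideal.map_le_iff_le_comap]
    intro x hx
    rw [Ideal.mem_comap, Ideal.mem_comap, iterateFrobenius_def, ← map_pow]
    exact Ideal.mem_map_of_mem φ
      (Ideal.mem_map_of_mem (iterateFrobenius (MvPolynomial (Fin n) K) p e) hx)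
  · rw [Ideal.map_le_iff_le_comap, Ideal.map_le_iff_le_comap]
    intro x hx
    rw [Ideal.mem_comap, Ideal.mem_comap, iterateFrobenius_def, map_pow]
    exact Ideal.mem_map_of_mem (iterateFrobenius (MvPolynomial (Fin n) K) p e)
      (Ideal.mem_map_of_mem φ hx)

theorem X_mem_J (p e : ℕ) [hp : Fact p.Prime] [CharP K p] {s : Finset (Fin n)}
    {f : MvPolynomial (Fin n) K} :
    f ∈ frobPow (Ideal.span (X '' (s : Set (Fin n)) : Set (MvPolynomial (Fin n) K))) (p ^ e) ↔
      ∀ a ∈ f.support, ∃ i ∈ s, p ^ e ≤ a i := by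
  rw [frobPow_eq_map, Ideal.map_span]
  have : (iterateFrobenius (MvPolynomial (Fin n) K) p e) '' (X '' (s : Set (Fin n))) =
      (fun a => monomial a (1 : K)) '' ((fun i => Finsupp.single i (p ^ e)) '' (s : Set (Fin n))) := by
    rw [Set.image_image, Set.image_image]
    apply Set.image_congr
    intro i _
    rw [iterateFrobenius_def, X_pow_eq_monomial]
  rw [this, mem_ideal_span_monomial_image]
  simp

/-- The degree bound in the case of variables. -/
theorem X_bound (p e : ℕ) [hp : Fact p.Prime] [CharP K p] {s : Finset (Fin n)}
    {f : MvPolynomial (Fin n) K} {d : ℕ} (hf : f.IsHomogeneous d)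
    (h1 : ∀ i ∈ s, X i * f ∈
      frobPow (Ideal.span (X '' (s : Set (Fin n)) : Set (MvPolynomial (Fin n) K))) (p ^ e))
    (h2 : f ∉ frobPow (Ideal.span (X '' (s : Set (Fin n)) : Set (MvPolynomial (Fin n) K))) (p ^ e)) :
    (p ^ e - 1) * s.card ≤ d := by
  classical
  rw [X_mem_J] at h2
  push Not at h2
  obtain ⟨a, ha, hlt⟩ := h2
  have key : ∀ i ∈ s, p ^ e - 1 ≤ a i := by
    intro i hi
    obtain ⟨j, hj, hle⟩ := (X_mem_J p e).1 (h1 i hi) (Finsupp.single i 1 + a) (by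
      rw [mem_support_iff, coeff_X_mul]; exact mem_support_iff.1 ha)
    have := hlt j hj
    by_cases hij : i = j
    · subst hij
      simp at hle
      omega
    · simp [Finsupp.single_apply, hij] at hle
      omega
  have hd : ∑ i, a i = d := by
    have := hf (mem_support_iff.1 ha)
    rw [← this, Finsupp.weight_apply, Finsupp.sum_fintype] <;> simp
  calc (p ^ e - 1) * s.card = ∑ i ∈ s, (p ^ e - 1) := by simp [mul_comm]
    _ ≤ ∑ i ∈ s, a i := Finset.sum_le_sum key
    _ ≤ ∑ i, a i := Finset.sum_le_sum_of_subset (Finset.subset_univ s)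
    _ = d := hd

theorem X_colon (p e : ℕ) [hp : Fact p.Prime] [CharP K p] {s : Finset (Fin n)}
    (g : MvPolynomial (Fin n) K) :
    g * (∏ i ∈ s, X i ^ (p ^ e - 1)) ∈
      frobPow (Ideal.span (X '' (s : Set (Fin n)) : Set (MvPolynomial (Fin n) K))) (p ^ e) ↔
    g ∈ Ideal.span (X '' (s : Set (Fin n)) : Set (MvPolynomial (Fin n) K)) := by
  classical
  have hpos : 0 < p ^ e := pow_pos hp.1.pos e
  set b : Fin n →₀ ℕ := ∑ i ∈ s, Finsupp.single i (p ^ e - 1) with hb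
  have hF : (∏ i ∈ s, X i ^ (p ^ e - 1) : MvPolynomial (Fin n) K) = monomial b 1 := by
    rw [hb, monomial_sum_one]
    simp [X_pow_eq_monomial]
  have hbi : ∀ i ∈ s, b i = p ^ e - 1 := by
    intro i hi
    rw [hb, Finsupp.finsetSum_apply, Finset.sum_eq_single i]
    · rw [Finsupp.single_eq_same]
    · intro j _ hj
      rw [Finsupp.single_eq_of_ne (Ne.symm hj)]
    · exact fun h => absurd hi h
  rw [hF, X_mem_J, X_mem_I0]
  constructor
  · intro h a ha
    obtain ⟨i, hi, hle⟩ := h (a + b) (by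
      rw [mem_support_iff, coeff_mul_monomial, mul_one]; exact mem_support_iff.1 ha)
    refine ⟨i, hi, ?_⟩
    rw [Finsupp.add_apply, hbi i hi] at hle
    omega
  · intro h c hc
    rw [mem_support_iff, coeff_mul_monomial'] at hc
    split_ifs at hc with hle
    · rw [mul_one] at hc
      obtain ⟨i, hi, h0⟩ := h _ (mem_support_iff.2 hc)
      refine ⟨i, hi, ?_⟩
      have := hle i
      rw [hbi i hi] at this
      rw [Finsupp.tsub_apply, hbi i hi] at h0
      omega
    · exact absurd rfl hc

theorem core_case (I J : Ideal (MvPolynomial (Fin n) K)) (q m : ℕ) (hq : 0 < q)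
    (hIp : I.IsPrime) (hh : I.height = m) (hJ : frobPow I q = J)
    (F : MvPolynomial (Fin n) K) (hF : F.IsHomogeneous ((q - 1) * m))
    (hFJ : ∀ g, g * F ∈ J ↔ g ∈ I)
    (hb : ∀ (f : MvPolynomial (Fin n) K) (d : ℕ), f.IsHomogeneous d → (∀ g ∈ I, g * f ∈ J) →
      f ∉ J → (q - 1) * m ≤ d) :
    vnum (frobPow I q) = alphaq I q ∧ alphaq I q = (q - 1) * m ∧
      (q - 1) * m = (q - 1) * heightI I := by
  have h1 : (1 : MvPolynomial (Fin n) K) ∉ I := fun h => hIp.ne_top ((Ideal.eq_top_iff_one I).2 h)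
  have hFnot : F ∉ J := fun h => h1 ((hFJ 1).1 (by simpa using h))
  have hcol : J.colon (Ideal.span {F}) = I := by
    ext g
    rw [Submodule.mem_colon, ← hFJ]
    constructor
    · intro h
      exact h F (Ideal.mem_span_singleton_self F)
    · intro h x hx
      obtain ⟨c, rfl⟩ := Ideal.mem_span_singleton'.1 hx
      rw [smul_eq_mul, mul_left_comm]
      exact J.mul_mem_left c h
  have hv : vnum (frobPow I q) = (q - 1) * m := by
    rw [hJ]
    unfold vnum
    apply le_antisymm
    · apply Nat.sInf_le
      refine ⟨F, hF, I, ?_, hcol⟩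
      refine (isAssociatedPrime_iff (M := MvPolynomial (Fin n) K ⧸ J)).2
        ⟨hIp, Ideal.Quotient.mk J F, ?_⟩
      ext g
      rw [Submodule.mem_colon_singleton, Submodule.mem_bot, ← hFJ,
        ← Ideal.Quotient.eq_zero_iff_mem, map_mul]
      rfl
    · apply le_csInf
      · refine ⟨_, F, hF, I, ?_, hcol⟩
        refine (isAssociatedPrime_iff (M := MvPolynomial (Fin n) K ⧸ J)).2
          ⟨hIp, Ideal.Quotient.mk J F, ?_⟩
        ext g
        rw [Submodule.mem_colon_singleton, Submodule.mem_bot, ← hFJ,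
          ← Ideal.Quotient.eq_zero_iff_mem, map_mul]
        rfl
      · rintro d ⟨f, hf, P, hP, hPf⟩
        have hPp : P.IsPrime := IsAssociatedPrime.isPrime hP
        have hmem : ∀ g, g ∈ P → g * f ∈ J := by
          intro g hg
          rw [← hPf, Submodule.mem_colon] at hg
          exact hg f (Ideal.mem_span_singleton_self f)
        apply hb f d hf
        · intro g hg
          apply hmem
          apply hPp.mem_of_pow_mem q
          rw [← hPf, Submodule.mem_colon]
          intro x _
          rw [smul_eq_mul]
          apply J.mul_mem_right
          rw [← hJ]
          exact Ideal.subset_span ⟨g, hg, rfl⟩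
        · intro hfJ
          apply hPp.ne_top
          rw [Ideal.eq_top_iff_one, ← hPf, Submodule.mem_colon]
          intro x hx
          obtain ⟨c, rfl⟩ := Ideal.mem_span_singleton'.1 hx
          rw [one_smul]
          exact J.mul_mem_left c hfJ
  have ha : alphaq I q = (q - 1) * m := by
    unfold alphaq
    rw [hJ]
    have hmem : (q - 1) * m ∈ {d : ℕ | ∃ f : MvPolynomial (Fin n) K, f.IsHomogeneous d ∧
        f ∈ J.colon I ∧ f ∉ J} := by
      refine ⟨F, hF, ?_, hFnot⟩
      rw [Submodule.mem_colon]
      intro g hg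
      rw [smul_eq_mul, mul_comm]
      exact (hFJ g).2 hg
    apply le_antisymm (Nat.sInf_le hmem)
    apply le_csInf ⟨_, hmem⟩
    rintro d ⟨f, hf, h2, h3⟩
    rw [Submodule.mem_colon] at h2
    refine hb f d hf (fun g hg => ?_) h3
    rw [mul_comm]
    exact h2 g hg
  refine ⟨hv.trans ha.symm, ha, ?_⟩
  congr 1
  have hA : Ass I = {I} := by
    unfold Ass
    rw [associatedPrimes.eq_singleton_of_isPrimary hIp.isPrimary, hIp.radical]
  unfold heightI
  rw [hA]
  have : {h : ℕ | ∃ 𝔭 ∈ ({I} : Set (Ideal (MvPolynomial (Fin n) K))), ∃ h𝔭 : 𝔭.IsPrime,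
    Order.height (⟨𝔭, h𝔭⟩ : PrimeSpectrum (MvPolynomial (Fin n) K)) = (h : ℕ∞)} = {m} := by
    ext h
    simp only [Set.mem_singleton_iff, exists_eq_left, Set.mem_setOf_eq]
    have h4 : Order.height (⟨I, hIp⟩ : PrimeSpectrum (MvPolynomial (Fin n) K)) = m := by
      rw [← PrimeSpectrum.height_eq_orderHeight]; exact hh
    constructor
    · rintro ⟨_, h5⟩
      rw [h4] at h5
      exact_mod_cast h5.symm
    · rintro rfl
      exact ⟨hIp, h4⟩
  rw [this, csInf_singleton]

/-- The linear form with given coefficients. -/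
def linForm : (Fin n → K) →ₗ[K] MvPolynomial (Fin n) K :=
  Fintype.linearCombination K (fun i => (X i : MvPolynomial (Fin n) K))

theorem linForm_hom (v : Fin n → K) : (linForm v).IsHomogeneous 1 := by
  rw [linForm, Fintype.linearCombination_apply]
  apply IsHomogeneous.sum
  intro i _
  rw [smul_eq_C_mul]
  exact (isHomogeneous_X K i).C_mul _

theorem linForm_surj {f : MvPolynomial (Fin n) K} (hf : f.IsHomogeneous 1) :
    ∃ v, linForm v = f := by
  have : f ∈ homogeneousSubmodule (Fin n) K 1 := hf
  rw [homogeneousSubmodule_one_eq_span_X, ← Fintype.range_linearCombination] at this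
  exact this

theorem linForm_single (i : Fin n) : linForm (K := K) (Pi.single i 1) = X i := by
  rw [linForm, Fintype.linearCombination_apply_single, one_smul]

theorem aeval_linForm (L : (Fin n → K) →ₗ[K] (Fin n → K)) (v : Fin n → K) :
    aeval (fun i => linForm (K := K) (L (Pi.single i 1))) (linForm v) = linForm (L v) := by
  have : (aeval (fun i => linForm (K := K) (L (Pi.single i 1)))).toLinearMap ∘ₗ linForm =
      linForm ∘ₗ L := by
    apply (Pi.basisFun K (Fin n)).ext
    intro i
    simp [linForm_single]
  exact DFunLike.congr_fun this v

/-- The linear change of coordinates. -/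
def linChange (L : (Fin n → K) ≃ₗ[K] (Fin n → K)) :
    MvPolynomial (Fin n) K ≃ₐ[K] MvPolynomial (Fin n) K :=
  AlgEquiv.ofAlgHom (aeval (fun i => linForm (K := K) (L.toLinearMap (Pi.single i 1))))
    (aeval (fun i => linForm (K := K) (L.symm.toLinearMap (Pi.single i 1))))
    (by
      ext1 i
      rw [AlgHom.comp_apply, aeval_X, aeval_linForm]
      simp [linForm_single])
    (by
      ext1 i
      rw [AlgHom.comp_apply, aeval_X, aeval_linForm]
      simp [linForm_single])

theorem linChange_hom (L : (Fin n → K) ≃ₗ[K] (Fin n → K)) {f : MvPolynomial (Fin n) K} {d : ℕ}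
    (hf : f.IsHomogeneous d) : (linChange L f).IsHomogeneous d := by
  have := hf.aeval (fun i => linForm (K := K) (L.toLinearMap (Pi.single i 1)))
    (fun i => linForm_hom _)
  rwa [one_mul] at this

theorem linChange_symm_hom (L : (Fin n → K) ≃ₗ[K] (Fin n → K)) {f : MvPolynomial (Fin n) K} {d : ℕ}
    (hf : f.IsHomogeneous d) : ((linChange L).symm f).IsHomogeneous d := by
  have := hf.aeval (fun i => linForm (K := K) (L.symm.toLinearMap (Pi.single i 1)))
    (fun i => linForm_hom _)
  rwa [one_mul] at this

theorem linChange_X (L : (Fin n → K) ≃ₗ[K] (Fin n → K)) (i : Fin n) :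
    linChange L (X i) = linForm (L (Pi.single i 1)) :=
  aeval_X _ i

theorem exists_linChange {m : ℕ} (l : Fin m → MvPolynomial (Fin n) K)
    (hl : ∀ i, (l i).IsHomogeneous 1) (hli : LinearIndependent K l) :
    ∃ (L : (Fin n → K) ≃ₗ[K] (Fin n → K)) (s : Finset (Fin n)), s.card = m ∧
      linChange L '' (X '' (s : Set (Fin n))) = Set.range l := by
  classical
  choose c hc using fun i => linForm_surj (hl i)
  have hci : LinearIndependent K c := by
    apply LinearIndependent.of_comp linForm
    have : ⇑linForm ∘ c = l := funext hc
    rwa [this]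
  let B := Module.Basis.sumExtend hci
  let e := B.indexEquiv (Pi.basisFun K (Fin n))
  let L : (Fin n → K) ≃ₗ[K] (Fin n → K) := (Pi.basisFun K (Fin n)).equiv B e.symm
  have hL : ∀ k : Fin m, L (Pi.single (e (Sum.inl k)) 1) = c k := by
    intro k
    have := (Pi.basisFun K (Fin n)).equiv_apply (e (Sum.inl k)) B e.symm
    rw [Pi.basisFun_apply, Equiv.symm_apply_apply] at this
    refine this.trans ?_
    simp only [B, Module.Basis.sumExtend, Module.Basis.reindex_apply, Module.Basis.extend_apply_self]
    rfl
  refine ⟨L, Finset.univ.image (fun k : Fin m => e (Sum.inl k)), ?_, ?_⟩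
  · rw [Finset.card_image_of_injective _ (fun a b h => Sum.inl_injective (e.injective h))]
    simp
  · rw [Finset.coe_image, Finset.coe_univ, Set.image_univ, ← Set.range_comp, ← Set.range_comp]
    congr 1
    ext1 k
    simp only [Function.comp_apply]
    rw [linChange_X, hL, hc]

theorem stmt7 {K : Type*} [Field K] {n : ℕ} (p : ℕ) (hp : p.Prime) [CharP K p]
    {m : ℕ} (l : Fin m → MvPolynomial (Fin n) K) (hl : ∀ i, (l i).IsHomogeneous 1)
    (hli : LinearIndependent K l)
    (I : Ideal (MvPolynomial (Fin n) K)) (hI : I = Ideal.span (Set.range l))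
    (q : ℕ) (hq : ∃ e : ℕ, q = p ^ e) (hq1 : 1 < q) :
    vnum (frobPow I q) = alphaq I q ∧ alphaq I q = (q - 1) * m ∧
      (q - 1) * m = (q - 1) * heightI I := by
  classical
  obtain ⟨e, rfl⟩ := hq
  haveI : Fact p.Prime := ⟨hp⟩
  obtain ⟨L, s, hs, hrange⟩ := exists_linChange l hl hli
  set I0 := Ideal.span (X '' (s : Set (Fin n)) : Set (MvPolynomial (Fin n) K)) with hI0
  set φ := (linChange L).toRingEquiv with hφ
  have hφs : ∀ f, φ.symm f = (linChange L).symm f := fun _ => rfl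
  have hφa : ∀ f, φ f = linChange L f := fun _ => rfl
  have hII : I = I0.map φ := by
    rw [hI, hI0, Ideal.map_span, ← hrange]
    rfl
  have hmem : ∀ (A : Ideal (MvPolynomial (Fin n) K)) f, f ∈ A.map φ ↔ φ.symm f ∈ A := by
    intro A f
    rw [← Ideal.comap_symm, Ideal.mem_comap]
  have hJJ : frobPow I (p ^ e) = (frobPow I0 (p ^ e)).map φ := by
    rw [hII, frobPow_map p e φ I0]
  have hX0 := X_prime (K := K) s
  refine core_case I _ (p ^ e) m (by omega) ?_ ?_ hJJ
    (φ (∏ i ∈ s, X i ^ (p ^ e - 1))) ?_ ?_ ?_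
  · rw [hII]
    exact Ideal.map_isPrime_of_equiv φ
  · rw [hII, RingEquiv.height_map, hI0, X_height, hs]
  · apply linChange_hom
    have := IsHomogeneous.prod s (fun i => (X i : MvPolynomial (Fin n) K) ^ (p ^ e - 1))
      (fun _ => p ^ e - 1) (fun i _ => by
        simpa using (isHomogeneous_X K i).pow (p ^ e - 1))
    simpa [hs, mul_comm] using this
  · intro g
    rw [hmem, hII, hmem, map_mul, RingEquiv.symm_apply_apply]
    exact X_colon p e _
  · intro f d hf h1 h2
    rw [hmem] at h2
    rw [← hs]
    refine X_bound p e (linChange_symm_hom L hf) (fun i hi => ?_) h2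
    have := h1 (φ (X i)) (by
      rw [hII, hmem, RingEquiv.symm_apply_apply]
      exact Ideal.subset_span ⟨i, hi, rfl⟩)
    rw [hmem, map_mul, RingEquiv.symm_apply_apply] at this
    exact this

end
end

section
/- Let S = K[x_1,…,x_n] be a standard graded polynomial ring over a field K of prime characteristic p, let I ⊂ S be a proper nonzero graded ideal, and let 𝔭 ∈ Ass(I) be an associated prime minimally generated by homogeneous elements g_1,…,g_m. Then for all q = p^e > 1, v(I^{[q]}) ≤ q·v_𝔭(I) + (q−1)·Σ_{i=1}^m deg g_i. -/
open MvPolynomial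

attribute [local instance] MvPolynomial.gradedAlgebra

noncomputable section

variable {K : Type*} [Field K] {n : ℕ}

theorem aux_flat_of_coords {R S A : Type*} [CommRing R] [CommRing S] [Fintype A] (φ : R →+* S)
    (y : A → S) (c : A → S →+ R) (hc : ∀ a r s, c a (φ r * s) = r * c a s)
    (hy : ∀ s, s = ∑ a, φ (c a s) * y a) : φ.Flat := by
  let _ := φ.toAlgebra
  change Module.Flat R S
  refine Module.Flat.of_forall_isTrivialRelation fun {l f x} h => ?_
  refine ⟨Fintype.card A, fun i j => c ((Fintype.equivFin A).symm j) (x i),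
    fun j => y ((Fintype.equivFin A).symm j), fun i => ?_, fun j => ?_⟩
  · rw [Equiv.sum_comp (Fintype.equivFin A).symm (fun a => c a (x i) • y a)]
    exact hy (x i)
  · have := congrArg (c ((Fintype.equivFin A).symm j)) h
    rw [map_sum, map_zero] at this
    rw [← this]
    exact Finset.sum_congr rfl fun i _ => (hc _ _ _).symm

theorem aux_colon_flat_alg {R S : Type*} [CommRing R] [CommRing S] [Algebra R S] [Module.Flat R S]
    (J : Ideal R) (u : R) (h : S) (k : ℕ) (s : Fin k → S) (a : Fin k → R) (ha : ∀ i, a i ∈ J)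
    (hh : u • h = ∑ i, a i • s i) :
    h ∈ (J.colon {u}).map (algebraMap R S) := by
  let F : Option (Fin k) → R := fun i => i.elim u (fun i => - a i)
  let X : Option (Fin k) → S := fun i => i.elim h s
  have key : ∑ i, F i • X i = 0 := by
    rw [Fintype.sum_option]
    change u • h + ∑ i, (- a i) • s i = 0
    simp only [neg_smul, Finset.sum_neg_distrib]
    rw [hh, add_neg_cancel]
  obtain ⟨l, b, y, hb, hb'⟩ := Module.Flat.isTrivialRelation_of_sum_smul_eq_zero
    (R := R) (M := S) (f := F) (x := X) key
  have h1 : h = _ := hb none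
  rw [h1]
  refine Ideal.sum_mem _ fun j _ => ?_
  rw [Algebra.smul_def]
  refine Ideal.mul_mem_right _ _ (Ideal.mem_map_of_mem _ ?_)
  rw [Submodule.mem_colon_singleton, smul_eq_mul]
  have h2 := hb' j
  rw [Fintype.sum_option] at h2
  change u * b none j + ∑ i, (- a i) * b (some i) j = 0 at h2
  simp only [neg_mul, Finset.sum_neg_distrib, add_neg_eq_zero] at h2
  rw [mul_comm, h2]
  exact Ideal.sum_mem _ fun i _ => J.mul_mem_right _ (ha i)

theorem aux_colon_flat {R S : Type*} [CommRing R] [CommRing S] (φ : R →+* S) (hφ : φ.Flat)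
    (J : Ideal R) (u : R) (h : S) (hh : φ u * h ∈ J.map φ) :
    h ∈ (J.colon {u}).map φ := by
  obtain ⟨k, s, g, hg⟩ := Submodule.mem_span_set'.1
    (show φ u * h ∈ Submodule.span S (φ '' J) from hh)
  have hex : ∀ i, ∃ a ∈ J, φ a = g i := fun i => (g i).2
  choose a ha hag using hex
  have key : φ u * h = ∑ i, φ (a i) * s i := by
    rw [← hg]
    exact Finset.sum_congr rfl fun i _ => by rw [hag, smul_eq_mul, mul_comm]
  let _ := φ.toAlgebra
  have : Module.Flat R S := hφ
  exact aux_colon_flat_alg J u h k s a ha key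

theorem aux_flat_map {K L : Type*} {σ : Type*} [Field K] [Field L] (φ : K →+* L) :
    (MvPolynomial.map φ : MvPolynomial σ K →+* MvPolynomial σ L).Flat := by
  let _ := φ.toAlgebra
  let _ := MvPolynomial.algebraMvPolynomial (R := K) (S := L) (σ := σ)
  have h : (algebraMap (MvPolynomial σ K) (MvPolynomial σ L)).Flat := by
    rw [RingHom.flat_algebraMap_iff]
    exact Module.Flat.isBaseChange K (MvPolynomial σ K) L (MvPolynomial σ L)
      (Algebra.IsPushout.out (R := K) (S := MvPolynomial σ K) (R' := L))
  exact h

theorem aux_flat_expand {K : Type*} [Field K] {n : ℕ} (q : ℕ) (hq : 0 < q) :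
    ((expand q : MvPolynomial (Fin n) K →ₐ[K] MvPolynomial (Fin n) K) :
      MvPolynomial (Fin n) K →+* MvPolynomial (Fin n) K).Flat := by
  let dv : (Fin n →₀ ℕ) → (Fin n →₀ ℕ) := fun m => Finsupp.equivFunOnFinite.symm fun i => m i / q
  let md : (Fin n →₀ ℕ) → (Fin n → Fin q) := fun m i => ⟨m i % q, Nat.mod_lt _ hq⟩
  let c : (Fin n → Fin q) → MvPolynomial (Fin n) K →ₗ[K] MvPolynomial (Fin n) K := fun a =>
    (basisMonomials (Fin n) K).constr K (fun m => if md m = a then monomial (dv m) 1 else 0)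
  have hc1 : ∀ a m, c a (monomial m 1) = if md m = a then monomial (dv m) 1 else 0 := by
    intro a m
    have := (basisMonomials (Fin n) K).constr_basis K
      (fun m => if md m = a then monomial (dv m) (1 : K) else 0) m
    rwa [coe_basisMonomials] at this
  have hc : ∀ a m (r : K), c a (monomial m r) = if md m = a then monomial (dv m) r else 0 := by
    intro a m r
    have : (monomial m r : MvPolynomial (Fin n) K) = r • monomial m 1 := by
      rw [smul_monomial, smul_eq_mul, mul_one]
    rw [this, map_smul, hc1]
    split_ifs
    · rw [smul_monomial, smul_eq_mul, mul_one]
    · simp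
  refine aux_flat_of_coords (A := Fin n → Fin q) _
    (fun a => monomial (Finsupp.equivFunOnFinite.symm fun i => (a i : ℕ)) 1)
    (fun a => (c a).toAddMonoidHom) ?_ ?_
  · intro a r s
    change c a (expand q r * s) = r * c a s
    induction r using MvPolynomial.induction_on' with
    | monomial m r =>
      rw [expand_monomial]
      induction s using MvPolynomial.induction_on' with
      | monomial m' t =>
        rw [monomial_mul, hc, hc]
        have h1 : md (q • m + m') = md m' := by
          ext i; simp [md]
        have h2 : dv (q • m + m') = m + dv m' := by
          ext i
          simp [dv, Nat.mul_add_div hq]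
        rw [h1, h2]
        split_ifs
        · rw [monomial_mul]
        · simp
      | add f g hf hg => rw [mul_add, map_add, map_add, mul_add, hf, hg]
    | add f g hf hg => rw [map_add, add_mul, add_mul, map_add, hf, hg]
  · intro s
    change s = ∑ a, expand q (c a s) * _
    induction s using MvPolynomial.induction_on' with
    | monomial m r =>
      rw [Finset.sum_eq_single (md m)]
      · rw [hc, if_pos rfl, expand_monomial, monomial_mul, mul_one]
        have h1 : q • dv m + Finsupp.equivFunOnFinite.symm (fun i => (md m i : ℕ)) = m := by
          ext i
          simp [dv, md, Nat.div_add_mod]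
        rw [h1]
      · intro b _ hb
        rw [hc, if_neg (Ne.symm hb)]
        simp
      · simp
    | add f g hf hg =>
      simp only [map_add, add_mul, Finset.sum_add_distrib]
      rw [← hf, ← hg]

theorem aux_flat_frob {K : Type*} [Field K] {n : ℕ} (p e : ℕ) [ExpChar K p] (hp : 0 < p) :
    (iterateFrobenius (MvPolynomial (Fin n) K) p e).Flat := by
  have : iterateFrobenius (MvPolynomial (Fin n) K) p e =
      ((expand (p ^ e) : MvPolynomial (Fin n) K →ₐ[K] MvPolynomial (Fin n) K) :
      MvPolynomial (Fin n) K →+* MvPolynomial (Fin n) K).comp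
        (MvPolynomial.map (iterateFrobenius K p e)) := by
    apply MvPolynomial.ringHom_ext
    · intro r
      simp [iterateFrobenius_def]
    · intro i
      simp [iterateFrobenius_def]
  rw [this]
  exact RingHom.Flat.comp (aux_flat_map _) (aux_flat_expand _ (pow_pos hp e))

theorem aux_frob_colon {K : Type*} [Field K] {n : ℕ} (p e : ℕ) (hp : p.Prime) [CharP K p]
    (J : Ideal (MvPolynomial (Fin n) K)) (u h : MvPolynomial (Fin n) K)
    (hh : u ^ (p ^ e) * h ∈ frobPow J (p ^ e)) :
    h ∈ frobPow (J.colon {u}) (p ^ e) := by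
  have := Fact.mk hp
  have : ExpChar K p := ExpChar.prime hp
  exact aux_colon_flat _ (aux_flat_frob p e hp.pos) J u h hh

theorem aux_exists_homog {K : Type*} [Field K] {n : ℕ}
    (I : Ideal (MvPolynomial (Fin n) K)) (hgr : IsGraded I)
    (𝔭 : Ideal (MvPolynomial (Fin n) K)) (h𝔭 : 𝔭 ∈ Ass I)
    (m : ℕ) (g : Fin m → MvPolynomial (Fin n) K) (dg : Fin m → ℕ)
    (hg : ∀ i, (g i).IsHomogeneous (dg i))
    (hspan : 𝔭 = Ideal.span (Set.range g)) :
    ∃ d : ℕ, ∃ f : MvPolynomial (Fin n) K, f.IsHomogeneous d ∧ I.colon (Ideal.span {f}) = 𝔭 := by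
  classical
  obtain ⟨hprime, x, hx⟩ := isAssociatedPrime_iff.1 (AssociatedPrimes.mem_iff.1 h𝔭)
  obtain ⟨f, rfl⟩ := Ideal.Quotient.mk_surjective x
  have hmem : ∀ r, r ∈ 𝔭 ↔ r * f ∈ I := by
    intro r
    rw [hx, Submodule.mem_colon_singleton, Submodule.mem_bot, ← Ideal.Quotient.eq_zero_iff_mem]
    rfl
  let 𝒜 := homogeneousSubmodule (Fin n) K
  let F : ℕ → MvPolynomial (Fin n) K := fun d => (DirectSum.decompose 𝒜 f d : MvPolynomial (Fin n) K)
  have hle : ∀ d, 𝔭 ≤ I.colon {F d} := by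
    intro d
    rw [hspan, Ideal.span_le]
    rintro _ ⟨i, rfl⟩
    rw [SetLike.mem_coe, Submodule.mem_colon_singleton, smul_eq_mul]
    have h1 : g i * f ∈ I := (hmem _).1 (hspan ▸ Ideal.subset_span ⟨i, rfl⟩)
    have h2 := hgr (dg i + d) h1
    rwa [DirectSum.coe_decompose_mul_add_of_left_mem 𝒜
      ((mem_homogeneousSubmodule _ _).2 (hg i))] at h2
  have hinf : (DirectSum.decompose 𝒜 f).support.inf (fun d => I.colon {F d}) ≤ 𝔭 := by
    intro r hr
    rw [hmem, ← DirectSum.sum_support_decompose 𝒜 f, Finset.mul_sum]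
    refine Ideal.sum_mem _ fun d hd => ?_
    have := (Submodule.mem_finsetInf.1 hr) d hd
    rwa [Submodule.mem_colon_singleton] at this
  obtain ⟨d, _, hd⟩ := (Ideal.IsPrime.inf_le' hprime).1 hinf
  refine ⟨d, F d, (mem_homogeneousSubmodule _ _).1 (DirectSum.decompose 𝒜 f d).2, ?_⟩
  rw [Ideal.colon_span]
  exact le_antisymm hd (hle d)

theorem stmt8 {K : Type*} [Field K] {n : ℕ} (p : ℕ) (hp : p.Prime) [CharP K p]
    (I : Ideal (MvPolynomial (Fin n) K)) (hgr : IsGraded I) (htop : I ≠ ⊤) (hbot : I ≠ ⊥)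
    (𝔭 : Ideal (MvPolynomial (Fin n) K)) (h𝔭 : 𝔭 ∈ Ass I)
    (m : ℕ) (g : Fin m → MvPolynomial (Fin n) K) (dg : Fin m → ℕ)
    (hg : ∀ i, (g i).IsHomogeneous (dg i))
    (hspan : 𝔭 = Ideal.span (Set.range g))
    (hmin : ∀ s : Set (MvPolynomial (Fin n) K), s ⊂ Set.range g → Ideal.span s ≠ 𝔭)
    (q : ℕ) (hq : ∃ e : ℕ, q = p ^ e) (hq1 : 1 < q) :
    vnum (frobPow I q) ≤ q * vnumLocal I 𝔭 + (q - 1) * ∑ i, dg i := by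
  obtain ⟨e, rfl⟩ := hq
  set q := p ^ e with hqdef
  have hprime : 𝔭.IsPrime := h𝔭.1
  obtain ⟨f, hf, hfc⟩ : vnumLocal I 𝔭 ∈ {d : ℕ | ∃ f : MvPolynomial (Fin n) K,
      f.IsHomogeneous d ∧ I.colon (Ideal.span {f}) = 𝔭} :=
    Nat.sInf_mem (aux_exists_homog I hgr 𝔭 h𝔭 m g dg hg hspan)
  rw [Ideal.colon_span] at hfc
  have hgp : ∀ i, g i ∈ 𝔭 := fun i => hspan ▸ Ideal.subset_span ⟨i, rfl⟩
  have hone : (1 : MvPolynomial (Fin n) K) ∉ frobPow 𝔭 q := by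
    intro h
    refine hprime.one_notMem ((Ideal.span_le.2 ?_ : frobPow 𝔭 q ≤ 𝔭) h)
    rintro _ ⟨a, ha, rfl⟩
    exact Ideal.pow_mem_of_mem _ ha _ (by omega)
  -- a product of the generators, outside the Frobenius power, with maximal exponents
  let T : Set (Fin m → Fin q) := {a | ∏ i, g i ^ (a i : ℕ) ∉ frobPow 𝔭 q}
  have hT : T.Nonempty := ⟨fun _ => ⟨0, by omega⟩, by simpa [T] using hone⟩
  obtain ⟨a, haT, hmax⟩ := Set.exists_max_image T (fun a => ∑ i, (a i : ℕ)) T.toFinite hT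
  set h := ∏ i, g i ^ (a i : ℕ) with hh
  have hgh : ∀ i, g i * h ∈ frobPow 𝔭 q := by
    intro i
    have hprod : g i * h = g i ^ ((a i : ℕ) + 1) * ∏ j ∈ Finset.univ.erase i, g j ^ (a j : ℕ) := by
      rw [hh, ← Finset.mul_prod_erase _ _ (Finset.mem_univ i), pow_succ]
      ring
    by_cases hi : (a i : ℕ) + 1 < q
    · by_contra hcon
      let b : Fin m → Fin q := Function.update a i ⟨(a i : ℕ) + 1, hi⟩
      have hbne : ∀ j ∈ Finset.univ.erase i, b j = a j := fun j hj =>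
        Function.update_of_ne (Finset.ne_of_mem_erase hj) _ _
      have hbi : (b i : ℕ) = a i + 1 := by simp [b]
      have hbT : b ∈ T := by
        change ∏ i, g i ^ (b i : ℕ) ∉ _
        rw [← Finset.mul_prod_erase _ _ (Finset.mem_univ i), hbi,
          Finset.prod_congr rfl (fun j hj => by rw [hbne j hj]), ← hprod]
        exact hcon
      have := hmax b hbT
      rw [← Finset.add_sum_erase _ _ (Finset.mem_univ i),
        ← Finset.add_sum_erase _ (fun i => (a i : ℕ)) (Finset.mem_univ i), hbi,
        Finset.sum_congr rfl (fun j hj => by rw [hbne j hj])] at this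
      omega
    · have : (a i : ℕ) + 1 = q := by have := (a i).2; omega
      rw [hprod, this]
      exact Ideal.mul_mem_right _ _ (Ideal.subset_span ⟨g i, hgp i, rfl⟩)
  have hph : ∀ u ∈ 𝔭, u * h ∈ frobPow 𝔭 q := by
    have : 𝔭 ≤ (frobPow 𝔭 q).colon {h} := by
      rw [hspan, Ideal.span_le]
      rintro _ ⟨i, rfl⟩
      rw [SetLike.mem_coe, Submodule.mem_colon_singleton, ← hspan]
      exact hgh i
    intro u hu
    simpa using Submodule.mem_colon_singleton.1 (this hu)
  have hfp : ∀ w ∈ frobPow 𝔭 q, w * f ^ q ∈ frobPow I q := by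
    have : frobPow 𝔭 q ≤ (frobPow I q).colon {f ^ q} := by
      refine Ideal.span_le.2 ?_
      rintro _ ⟨w, hw, rfl⟩
      rw [SetLike.mem_coe, Submodule.mem_colon_singleton, smul_eq_mul]
      change w ^ q * f ^ q ∈ _
      rw [← mul_pow]
      refine Ideal.subset_span ⟨w * f, ?_, rfl⟩
      have hw' : w ∈ I.colon {f} := hfc ▸ hw
      simpa using Submodule.mem_colon_singleton.1 hw'
    intro w hw
    simpa using Submodule.mem_colon_singleton.1 (this hw)
  have hcolon : (frobPow I q).colon {f ^ q * h} = 𝔭 := by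
    ext u
    rw [Submodule.mem_colon_singleton, smul_eq_mul]
    constructor
    · intro hu
      by_contra hup
      have h1 : f ^ q * (u * h) ∈ frobPow I q := by convert hu using 1; ring
      have h2 := aux_frob_colon p e hp I f _ h1
      rw [hfc] at h2
      have h3 : u ^ q * h ∈ frobPow 𝔭 q := by
        have : u ^ q * h = u ^ (q - 1) * (u * h) := by
          rw [← mul_assoc, ← pow_succ, Nat.sub_add_cancel (by omega)]
        rw [this]
        exact Ideal.mul_mem_left _ _ h2
      have h4 := aux_frob_colon p e hp 𝔭 u _ h3
      have h5 : 𝔭.colon {u} = 𝔭 := by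
        ext r
        rw [Submodule.mem_colon_singleton, smul_eq_mul, hprime.mul_mem_iff_mem_or_mem]
        tauto
      rw [h5] at h4
      exact haT h4
    · intro hu
      have := hfp _ (hph u hu)
      convert this using 1
      ring
  have hdeg : (f ^ q * h).IsHomogeneous (vnumLocal I 𝔭 * q + ∑ i, dg i * (a i : ℕ)) :=
    (hf.pow q).mul (IsHomogeneous.prod _ _ _ fun i _ => (hg i).pow _)
  have hass : 𝔭 ∈ Ass (frobPow I q) := by
    refine AssociatedPrimes.mem_iff.2 (isAssociatedPrime_iff.2
      ⟨hprime, Ideal.Quotient.mk _ (f ^ q * h), ?_⟩)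
    rw [← hcolon]
    ext u
    rw [Submodule.mem_colon_singleton, Submodule.mem_colon_singleton, Submodule.mem_bot,
      smul_eq_mul, ← Ideal.Quotient.eq_zero_iff_mem]
    rfl
  have hle : vnum (frobPow I q) ≤ vnumLocal I 𝔭 * q + ∑ i, dg i * (a i : ℕ) :=
    Nat.sInf_le ⟨f ^ q * h, hdeg, 𝔭, hass, by rw [Ideal.colon_span, hcolon]⟩
  refine hle.trans ?_
  rw [mul_comm q, Finset.mul_sum]
  refine Nat.add_le_add_left (Finset.sum_le_sum fun i _ => ?_) _
  rw [mul_comm]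
  exact Nat.mul_le_mul_right _ (by have := (a i).2; omega)

end
end

section
/- Let S = K[x_1,…,x_n] be a standard graded polynomial ring over a field K of prime characteristic p, and let I ⊂ S be a proper nonzero graded ideal all of whose associated primes are generated by linear forms. Then for all q = p^e > 1, v(I^{[q]}) ≤ q·v(I) + (q−1)·bight(I). -/
open MvPolynomial

attribute [local instance] MvPolynomial.gradedAlgebra

noncomputable section

variable {K : Type*} [Field K] {n : ℕ}

theorem flat_colon_aux' {R S : Type*} [CommRing R] [CommRing S] [Algebra R S] [Module.Flat R S]
    (I : Ideal R) (f : R) (g : S) (h : g * algebraMap R S f ∈ I.map (algebraMap R S)) :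
    g ∈ (I.colon (Ideal.span {f} : Ideal R)).map (algebraMap R S) := by
  rw [Ideal.map, Ideal.span, Submodule.mem_span_set'] at h
  obtain ⟨m, s, a, h⟩ := h
  have ha : ∀ i, ∃ b ∈ I, algebraMap R S b = a i := fun i => (a i).2
  choose b hb hba using ha
  let F : Option (Fin m) → R := fun i => Option.elim i f b
  let G : Option (Fin m) → S := fun i => Option.elim i g (fun i => - s i)
  have key : ∑ i : Option (Fin m), F i • G i = 0 := by
    rw [Fintype.sum_option]
    simp only [F, G, Option.elim, Algebra.smul_def]
    rw [mul_comm, ← h]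
    simp [hba, mul_comm]
  obtain ⟨k, c, y, h1, h2⟩ := Module.Flat.isTrivialRelation_of_sum_smul_eq_zero (R := R) (M := S) (f := F) (x := G) key
  have h4 : g = ∑ j, c none j • y j := h1 none
  rw [h4]
  refine Ideal.sum_mem _ fun j _ => ?_
  rw [Algebra.smul_def]
  refine Ideal.mul_mem_right _ _ (Ideal.mem_map_of_mem _ ?_)
  rw [Ideal.mem_colon_span_singleton]
  have h3 := h2 j
  rw [Fintype.sum_option] at h3
  have h5 : c none j * f = - ∑ i, b i * c (some i) j := by
    rw [mul_comm]; exact eq_neg_of_add_eq_zero_left h3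
  rw [h5]
  exact I.neg_mem (I.sum_mem fun i _ => I.mul_mem_right _ (hb i))

theorem flat_colon_aux {R S : Type*} [CommRing R] [CommRing S] (φ : R →+* S) (hφ : φ.Flat)
    (I : Ideal R) (f : R) (g : S) (h : g * φ f ∈ I.map φ) :
    g ∈ (I.colon (Ideal.span {f} : Ideal R)).map φ := by
  let := φ.toAlgebra
  have : Module.Flat R S := hφ
  exact flat_colon_aux' I f g h

section
attribute [local instance] MvPolynomial.algebraMvPolynomial

theorem flat_map_aux' {F L : Type*} [Field F] [Field L] [Algebra F L] {σ : Type*} :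
    (MvPolynomial.map (σ := σ) (algebraMap F L)).Flat := by
  have h : Algebra.IsPushout F (MvPolynomial σ F) L (MvPolynomial σ L) := inferInstance
  exact RingHom.flat_algebraMap_iff.2
    (Module.Flat.isBaseChange F (MvPolynomial σ F) L (MvPolynomial σ L) h.out)
end

theorem flat_map_aux {F L : Type*} [Field F] [Field L] {σ : Type*} (ψ : F →+* L) :
    (MvPolynomial.map (σ := σ) ψ).Flat := by
  let := ψ.toAlgebra
  exact flat_map_aux' (F := F) (L := L)

/-- the contraction operator -/
def contr {F : Type*} [Field F] {m : ℕ} (q : ℕ) (r : Fin m → Fin q) :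
    MvPolynomial (Fin m) F →ₗ[F] MvPolynomial (Fin m) F :=
  (basisMonomials (Fin m) F).constr F (fun t => if (∀ i, t i % q = r i) then
    monomial (t.mapRange (· / q) (by simp)) 1 else 0)

theorem contr_monomial {F : Type*} [Field F] {m : ℕ} (q : ℕ) (r : Fin m → Fin q)
    (t : Fin m →₀ ℕ) (c : F) : contr q r (monomial t c) = if (∀ i, t i % q = r i) then
    monomial (t.mapRange (· / q) (by simp)) c else 0 := by
  have h : monomial t c = c • basisMonomials (Fin m) F t := by simp [smul_monomial]
  rw [h, map_smul, contr, Module.Basis.constr_basis]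
  split_ifs <;> simp [smul_monomial]

theorem contr_mul {F : Type*} [Field F] {m : ℕ} (q : ℕ) (hq : 0 < q) (r : Fin m → Fin q)
    (a g : MvPolynomial (Fin m) F) : contr q r (g * expand q a) = a * contr q r g := by
  induction a using MvPolynomial.induction_on' with
  | add a b ha hb => simp [mul_add, add_mul, ha, hb]
  | monomial s c =>
    induction g using MvPolynomial.induction_on' with
    | add a b ha hb => rw [add_mul, map_add, map_add, ha, hb, mul_add]
    | monomial t d =>
      rw [expand_monomial, monomial_mul, contr_monomial, contr_monomial]
      simp only [Finsupp.add_apply, Finsupp.smul_apply, smul_eq_mul, Nat.add_mul_mod_self_left]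
      split_ifs
      · rw [monomial_mul, mul_comm d c]
        refine congrArg (fun u => monomial u (c * d)) ?_
        ext i
        simp [Nat.add_mul_div_left _ _ hq, add_comm]
      · simp

theorem contr_sum {F : Type*} [Field F] {m : ℕ} (q : ℕ) (hq : 0 < q) 
    (g : MvPolynomial (Fin m) F) :
    g = ∑ r : Fin m → Fin q, monomial (Finsupp.equivFunOnFinite.symm (fun i => (r i : ℕ))) 1 *
      expand q (contr q r g) := by
  induction g using MvPolynomial.induction_on' with
  | add a b ha hb =>
    simp only [map_add, mul_add, Finset.sum_add_distrib]
    rw [← ha, ← hb]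
  | monomial t d =>
    rw [Finset.sum_eq_single (fun i => ⟨t i % q, Nat.mod_lt _ hq⟩)]
    · rw [contr_monomial, if_pos (by simp), expand_monomial, monomial_mul, one_mul]
      refine congrArg (fun u => monomial u d) ?_
      ext i
      simp [Nat.mod_add_div]
    · intro r _ hr
      rw [contr_monomial, if_neg, map_zero, mul_zero]
      intro h
      exact hr (funext fun i => Fin.ext (h i).symm)
    · simp

theorem expand_colon {F : Type*} [Field F] {m : ℕ} (q : ℕ) (hq : 0 < q)
    (I : Ideal (MvPolynomial (Fin m) F)) (f g : MvPolynomial (Fin m) F)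
    (h : g * expand q f ∈ I.map (expand q : MvPolynomial (Fin m) F →ₐ[F] _)) :
    g ∈ (I.colon (Ideal.span {f} : Ideal _)).map (expand q : MvPolynomial (Fin m) F →ₐ[F] _) := by
  have key : ∀ r, ∀ x ∈ I.map (expand q : MvPolynomial (Fin m) F →ₐ[F] _), contr q r x ∈ I := by
    intro r x hx
    rw [Ideal.map, Ideal.span, Submodule.mem_span_set'] at hx
    obtain ⟨k, s, a, rfl⟩ := hx
    rw [map_sum]
    refine I.sum_mem fun i _ => ?_
    obtain ⟨b, hb, hba⟩ := (a i).2
    rw [← hba, smul_eq_mul]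
    change contr q r (s i * expand q b) ∈ I
    rw [contr_mul q hq]
    exact I.mul_mem_right _ hb
  rw [contr_sum q hq g]
  refine Ideal.sum_mem _ fun r _ => Ideal.mul_mem_left _ _ (Ideal.mem_map_of_mem _ ?_)
  rw [Ideal.mem_colon_span_singleton, mul_comm, ← contr_mul q hq]
  exact key r _ h


theorem frobPow_colon {F : Type*} [Field F] {m : ℕ} (p : ℕ) (hp : p.Prime) [CharP F p]
    (e : ℕ) (I : Ideal (MvPolynomial (Fin m) F)) (f g : MvPolynomial (Fin m) F)
    (h : g * f ^ (p ^ e) ∈ frobPow I (p ^ e)) :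
    g ∈ frobPow (I.colon (Ideal.span {f} : Ideal _)) (p ^ e) := by
  have : Fact p.Prime := ⟨hp⟩
  have : ExpChar F p := ExpChar.prime hp
  let φ : MvPolynomial (Fin m) F →+* MvPolynomial (Fin m) F := MvPolynomial.map (iterateFrobenius F p e)
  let ε : MvPolynomial (Fin m) F →+* MvPolynomial (Fin m) F :=
    (expand (p ^ e) : MvPolynomial (Fin m) F →ₐ[F] _).toRingHom
  have hφ : ∀ x, φ (ε x) = x ^ p ^ e := fun x => map_iterateFrobenius_expand p x e
  have hfp : ∀ J : Ideal (MvPolynomial (Fin m) F), frobPow J (p ^ e) = (J.map ε).map φ := by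
    intro J
    rw [Ideal.map_map, frobPow, Ideal.map]
    congr 1
    ext x
    simp [← hφ]
  rw [hfp] at h ⊢
  rw [← hφ] at h
  refine Ideal.map_mono ?_ (flat_colon_aux φ (flat_map_aux _) _ _ _ h)
  intro x hx
  rw [Ideal.mem_colon_span_singleton] at hx
  exact expand_colon _ (pow_pos hp.pos e) _ _ _ hx

theorem span_X_eq_ker {F : Type*} [Field F] {m : ℕ} (s : Finset (Fin m)) :
    (Ideal.span ((X : Fin m → MvPolynomial (Fin m) F) '' s)) =
    RingHom.ker (aeval (fun i => if i ∈ s then 0 else X i) :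
      MvPolynomial (Fin m) F →ₐ[F] MvPolynomial (Fin m) F) := by
  apply le_antisymm
  · rw [Ideal.span_le]
    rintro _ ⟨i, hi, rfl⟩
    simp only [Finset.mem_coe] at hi
    simp [RingHom.mem_ker, hi]
  · intro x hx
    have key : ∀ x : MvPolynomial (Fin m) F, x - (aeval (fun i => if i ∈ s then 0 else X i) :
      MvPolynomial (Fin m) F →ₐ[F] MvPolynomial (Fin m) F) x ∈
        (Ideal.span ((X : Fin m → MvPolynomial (Fin m) F) '' s)) := by
      intro x
      rw [← Ideal.Quotient.eq, ← Ideal.Quotient.mkₐ_eq_mk F, ← AlgHom.comp_apply]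
      refine DFunLike.congr_fun ?_ x
      apply MvPolynomial.algHom_ext
      intro i
      simp only [Ideal.Quotient.mkₐ_eq_mk, AlgHom.comp_apply, aeval_X]
      split_ifs with h
      · rw [map_zero, Ideal.Quotient.eq_zero_iff_mem]
        exact Ideal.subset_span ⟨i, h, rfl⟩
      · rfl
    have := key x
    rwa [(RingHom.mem_ker).1 hx, sub_zero] at this

theorem span_X_prime {F : Type*} [Field F] {m : ℕ} (s : Finset (Fin m)) :
    (Ideal.span ((X : Fin m → MvPolynomial (Fin m) F) '' s)).IsPrime := by
  rw [span_X_eq_ker]; exact RingHom.ker_isPrime _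

theorem span_X_height {F : Type*} [Field F] {m : ℕ} (s : Finset (Fin m)) :
    (s.card : ℕ∞) ≤ (Ideal.span ((X : Fin m → MvPolynomial (Fin m) F) '' s)).height := by
  induction s using Finset.induction_on with
  | empty => simp
  | insert i s hi ih =>
    have := span_X_prime (F := F) s
    have := span_X_prime (F := F) (insert i s)
    rw [Finset.card_insert_of_notMem hi]
    have hlt : (Ideal.span ((X : Fin m → MvPolynomial (Fin m) F) '' s)) <
        (Ideal.span ((X : Fin m → MvPolynomial (Fin m) F) '' (insert i s : Finset (Fin m)))) := by
      refine lt_of_le_of_ne (Ideal.span_mono (Set.image_mono (by simp))) ?_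
      intro h
      have h1 : (X i : MvPolynomial (Fin m) F) ∈
          (Ideal.span ((X : Fin m → MvPolynomial (Fin m) F) '' s)) := by
        rw [h]; exact Ideal.subset_span ⟨i, by simp, rfl⟩
      rw [span_X_eq_ker, RingHom.mem_ker] at h1
      simp [hi] at h1
    have := Ideal.height_strict_mono_of_isPrime hlt
    rw [Nat.cast_add, Nat.cast_one]
    exact (add_le_add_left ih 1).trans (Order.add_one_le_of_lt this)

theorem X_colon_s9 {F : Type*} [Field F] {m : ℕ} (s : Finset (Fin m)) (q : ℕ) (hq : 0 < q)
    (g : MvPolynomial (Fin m) F)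
    (h : g * (∏ i ∈ s, X i) ^ (q - 1) ∈ Ideal.span ((fun i => (X i : MvPolynomial (Fin m) F) ^ q) '' s)) :
    g ∈ (Ideal.span ((X : Fin m → MvPolynomial (Fin m) F) '' s)) := by
  let t : Fin m →₀ ℕ := ∑ i ∈ s, Finsupp.single i (q - 1)
  have ht : (∏ i ∈ s, (X i : MvPolynomial (Fin m) F)) ^ (q - 1) = monomial t 1 := by
    rw [← Finset.prod_pow]
    simp only [X_pow_eq_monomial]
    exact (monomial_sum_one s _).symm
  have hti : ∀ i ∈ s, t i = q - 1 := by
    intro i hi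
    rw [Finsupp.finsetSum_apply, Finset.sum_eq_single i]
    · rw [Finsupp.single_eq_same]
    · intro j _ hj
      exact Finsupp.single_eq_of_ne hj.symm
    · exact fun h => absurd hi h
  have hs : ((fun i => (X i : MvPolynomial (Fin m) F) ^ q) '' s) =
      (fun u => monomial u (1 : F)) '' ((fun i => Finsupp.single i q) '' (s : Set (Fin m))) := by
    rw [Set.image_image]
    simp only [X_pow_eq_monomial]
  rw [hs, ht, mem_ideal_span_monomial_image] at h
  rw [mem_ideal_span_X_image]
  intro u hu
  obtain ⟨_, ⟨i, hi, rfl⟩, hle⟩ := h (u + t) (by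
    rw [mem_support_iff] at hu ⊢
    rw [coeff_mul_monomial, mul_one]; exact hu)
  refine ⟨i, hi, fun h0 => ?_⟩
  have := hle i
  simp [h0, hti i hi] at this
  omega

theorem exists_coords {F : Type*} [Field F] {m : ℕ} (L : Set (MvPolynomial (Fin m) F))
    (hL : ∀ l ∈ L, MvPolynomial.IsHomogeneous l 1) :
    ∃ (φ : MvPolynomial (Fin m) F ≃ₐ[F] MvPolynomial (Fin m) F) (s : Finset (Fin m)),
      (∀ i, (φ (X i)).IsHomogeneous 1) ∧
      Ideal.span L = (Ideal.span ((X : Fin m → MvPolynomial (Fin m) F) '' s)).map φ := by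
  classical
  let V := homogeneousSubmodule (Fin m) F 1
  obtain ⟨B, hBL, hBspan, hBli⟩ := exists_linearIndependent F L
  have hBV : ∀ b ∈ B, b ∈ V := fun b hb => hL b (hBL hb)
  have hVspan : V = Submodule.span F (Set.range (X : Fin m → MvPolynomial (Fin m) F)) :=
    homogeneousSubmodule_one_eq_span_X
  obtain ⟨E, hEV, hBE, hVE, hEli⟩ :=
    exists_linearIndepOn_id_extension (t := (V : Set (MvPolynomial (Fin m) F))) hBli hBV
  have hEspan : Submodule.span F (Set.range (Subtype.val : E → MvPolynomial (Fin m) F)) = V := by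
    rw [Subtype.range_coe]
    exact le_antisymm (Submodule.span_le.2 hEV) hVE
  have hEli' : LinearIndependent F (Subtype.val : E → MvPolynomial (Fin m) F) := hEli
  let c : Module.Basis (Fin m) F V :=
    (Module.Basis.span (linearIndependent_X (Fin m) F)).map (LinearEquiv.ofEq _ _ hVspan.symm)
  let b0 : Module.Basis E F V :=
    (Module.Basis.span hEli').map (LinearEquiv.ofEq _ _ hEspan)
  let e : E ≃ Fin m := b0.indexEquiv c
  let b : Module.Basis (Fin m) F V := b0.reindex e
  have hc : ∀ i, (c i : MvPolynomial (Fin m) F) = X i := by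
    intro i
    simp [c, Module.Basis.span_apply]
  have hb : ∀ i, (b i : MvPolynomial (Fin m) F) = e.symm i := by
    intro i
    simp [b, b0, Module.Basis.span_apply]
  let Λ : V →ₗ[F] MvPolynomial (Fin m) F := b.constr F X
  have hΛ : ∀ i, Λ (b i) = X i := fun i => b.constr_basis F _ i
  let φ : MvPolynomial (Fin m) F →ₐ[F] MvPolynomial (Fin m) F :=
    aeval (fun i => (b i : MvPolynomial (Fin m) F))
  let ψ : MvPolynomial (Fin m) F →ₐ[F] MvPolynomial (Fin m) F := aeval (fun i => Λ (c i))
  have hφ : φ.toLinearMap ∘ₗ Λ = V.subtype := b.ext fun i => by simp [hΛ, φ]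
  have hψ : ψ.toLinearMap ∘ₗ V.subtype = Λ := c.ext fun i => by simp [hc, ψ]
  have hφ' : ∀ v : V, φ (Λ v) = v := fun v => DFunLike.congr_fun hφ v
  have hψ' : ∀ v : V, ψ v = Λ v := fun v => DFunLike.congr_fun hψ v
  have hφX : ∀ i, φ (X i) = b i := fun i => by simp [φ]
  let Φ : MvPolynomial (Fin m) F ≃ₐ[F] MvPolynomial (Fin m) F := AlgEquiv.ofAlgHom φ ψ
    (by
      apply MvPolynomial.algHom_ext
      intro i
      simp only [AlgHom.comp_apply, ψ, aeval_X, hφ', hc, AlgHom.id_apply])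
    (by
      apply MvPolynomial.algHom_ext
      intro i
      simp only [AlgHom.comp_apply, hφX, hψ', hΛ, AlgHom.id_apply])
  refine ⟨Φ, Finset.univ.filter (fun i => (b i : MvPolynomial (Fin m) F) ∈ B), ?_, ?_⟩
  · intro i
    change (φ (X i)).IsHomogeneous 1
    rw [hφX]
    exact (b i).2
  · rw [Ideal.map_span]
    have h1 : (Φ '' ((X : Fin m → MvPolynomial (Fin m) F) ''
        (Finset.univ.filter (fun i => (b i : MvPolynomial (Fin m) F) ∈ B) : Finset (Fin m)))) = B := by
      ext x
      constructor
      · rintro ⟨_, ⟨i, hi, rfl⟩, rfl⟩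
        change φ (X i) ∈ B
        rw [hφX]
        simpa using hi
      · intro hx
        have h2 : (b (e ⟨x, hBE hx⟩) : MvPolynomial (Fin m) F) = x := by rw [hb]; simp
        refine ⟨X (e ⟨x, hBE hx⟩), ⟨e ⟨x, hBE hx⟩, ?_, rfl⟩, ?_⟩
        · simpa [h2] using hx
        · exact (hφX _).trans h2
    rw [h1]
    refine le_antisymm (Ideal.span_le.2 fun l hl => ?_) (Ideal.span_mono hBL)
    have h3 : l ∈ Submodule.span F B := by rw [hBspan]; exact Submodule.subset_span hl
    exact Submodule.span_le_restrictScalars F (MvPolynomial (Fin m) F) B h3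

theorem frobPow_span {F : Type*} [Field F] {m : ℕ} (p : ℕ) (hp : p.Prime) [CharP F p]
    (e : ℕ) (T : Set (MvPolynomial (Fin m) F)) :
    frobPow (Ideal.span T) (p ^ e) = Ideal.span ((fun a => a ^ (p ^ e)) '' T) := by
  have : ExpChar F p := ExpChar.prime hp
  have h : frobPow (Ideal.span T) (p ^ e) =
    (Ideal.span T).map (iterateFrobenius (MvPolynomial (Fin m) F) p e) := by
    rw [frobPow, Ideal.map]
    rfl
  rw [h, Ideal.map_span]
  rfl

theorem mem_Ass_iff {F : Type*} [Field F] {m : ℕ} (I P : Ideal (MvPolynomial (Fin m) F)) :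
    P ∈ Ass I ↔ P.IsPrime ∧ ∃ f, I.colon (Ideal.span {f} : Ideal (MvPolynomial (Fin m) F)) = P := by
  have key : ∀ f : MvPolynomial (Fin m) F, (⊥ : Submodule (MvPolynomial (Fin m) F)
      (MvPolynomial (Fin m) F ⧸ I)).colon {Ideal.Quotient.mk I f} =
      I.colon (Ideal.span {f} : Ideal (MvPolynomial (Fin m) F)) := by
    intro f
    ext r
    rw [Ideal.mem_colon_span_singleton, Submodule.mem_colon_singleton, Submodule.mem_bot,
      ← Ideal.Quotient.eq_zero_iff_mem, map_mul]
    rfl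
  rw [Ass, AssociatedPrimes.mem_iff, isAssociatedPrime_iff]
  refine and_congr_right fun _ => ⟨?_, ?_⟩
  · rintro ⟨x, hx⟩
    obtain ⟨f, rfl⟩ := Ideal.Quotient.mk_surjective x
    exact ⟨f, by rw [hx, key]⟩
  · rintro ⟨f, hf⟩
    exact ⟨Ideal.Quotient.mk I f, by rw [← hf, key]⟩

theorem exists_homog {F : Type*} [Field F] {m : ℕ} (I P : Ideal (MvPolynomial (Fin m) F))
    (hgr : IsGraded I) (hP : P ∈ Ass I) (L : Set (MvPolynomial (Fin m) F))
    (hL : ∀ l ∈ L, MvPolynomial.IsHomogeneous l 1) (hPL : P = Ideal.span L) :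
    ∃ d, ∃ f : MvPolynomial (Fin m) F, f.IsHomogeneous d ∧
      I.colon (Ideal.span {f} : Ideal (MvPolynomial (Fin m) F)) = P := by
  obtain ⟨hprime, f, hf⟩ := (mem_Ass_iff I P).1 hP
  have h1 : ∀ d, P ≤ I.colon (Ideal.span {homogeneousComponent d f} : Ideal (MvPolynomial (Fin m) F)) := by
    intro d
    rw [hPL, Ideal.span_le]
    intro l hl
    rw [SetLike.mem_coe, Ideal.mem_colon_span_singleton]
    have h2 : l * f ∈ I := by
      rw [← Ideal.mem_colon_span_singleton, hf, hPL]
      exact Ideal.subset_span hl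
    have h3 := hgr (1 + d) h2
    rw [DirectSum.coe_decompose_mul_add_of_left_mem (homogeneousSubmodule (Fin m) F) (hL l hl)] at h3
    have h4 : ((DirectSum.decompose (homogeneousSubmodule (Fin m) F) f) d : MvPolynomial (Fin m) F)
      = homogeneousComponent d f := by
      exact decomposition.decompose'_apply _ _
    rwa [h4] at h3
  have h5 : (Finset.range (f.totalDegree + 1)).inf (fun d =>
      I.colon (Ideal.span {homogeneousComponent d f} : Ideal (MvPolynomial (Fin m) F))) ≤ P := by
    intro g hg
    rw [← hf, Ideal.mem_colon_span_singleton, ← sum_homogeneousComponent f, Finset.mul_sum]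
    refine I.sum_mem fun d hd => ?_
    rw [← Ideal.mem_colon_span_singleton]
    exact (Submodule.mem_finsetInf.1 hg) d hd
  obtain ⟨d, -, hd⟩ := (hprime.inf_le').1 h5
  exact ⟨d, _, homogeneousComponent_isHomogeneous d f, le_antisymm hd (h1 d)⟩

theorem linear_colon {F : Type*} [Field F] {m : ℕ} (p : ℕ) (hp : p.Prime) [CharP F p]
    (e : ℕ) (P : Ideal (MvPolynomial (Fin m) F)) (L : Set (MvPolynomial (Fin m) F))
    (hL : ∀ l ∈ L, MvPolynomial.IsHomogeneous l 1) (hPL : P = Ideal.span L) :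
    ∃ (k : ℕ) (w : MvPolynomial (Fin m) F), (k : ℕ∞) ≤ P.height ∧
      w.IsHomogeneous ((p ^ e - 1) * k) ∧ ∀ g, g * w ∈ frobPow P (p ^ e) ↔ g ∈ P := by
  obtain ⟨φ, s, hφ, hs⟩ := exists_coords L hL
  have hq : 0 < p ^ e := pow_pos hp.pos e
  have hP : P = Ideal.span (φ '' ((X : Fin m → MvPolynomial (Fin m) F) '' s)) := by
    rw [hPL, hs, Ideal.map_span]
  refine ⟨s.card, (∏ i ∈ s, φ (X i)) ^ (p ^ e - 1), ?_, ?_, ?_⟩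
  · have h := RingEquiv.height_map φ.toRingEquiv (Ideal.span ((X : Fin m → MvPolynomial (Fin m) F) '' s))
    rw [hPL, hs]
    exact (span_X_height s).trans h.ge
  · have h := (IsHomogeneous.prod s (fun i => φ (X i)) (fun _ => 1) (fun i _ => hφ i)).pow (p ^ e - 1)
    simpa [mul_comm] using h
  · intro g
    constructor
    · intro h
      rw [hP, frobPow_span p hp] at h
      have h2 : Ideal.span ((fun a => a ^ (p ^ e)) '' (φ '' ((X : Fin m → MvPolynomial (Fin m) F) '' s)))
          = (Ideal.span ((fun i => (X i : MvPolynomial (Fin m) F) ^ (p ^ e)) '' s)).map φ := by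
        rw [Ideal.map_span, Set.image_image, Set.image_image, Set.image_image]
        simp only [map_pow]
      obtain ⟨g, rfl⟩ := φ.surjective g
      rw [← map_prod, ← map_pow, ← map_mul, h2] at h
      obtain ⟨y, hy, hyy⟩ := (Ideal.mem_map_of_equiv φ _).1 h
      rw [φ.injective hyy] at hy
      have := X_colon_s9 s _ hq g hy
      rw [hPL, hs]
      exact Ideal.mem_map_of_mem _ this
    · intro h
      have h3 : P ≤ (frobPow P (p ^ e)).colon
          (Ideal.span {(∏ i ∈ s, φ (X i)) ^ (p ^ e - 1)} : Ideal (MvPolynomial (Fin m) F)) := by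
        conv_lhs => rw [hP]
        rw [Ideal.span_le]
        rintro _ ⟨_, ⟨i, hi, rfl⟩, rfl⟩
        rw [SetLike.mem_coe, Ideal.mem_colon_span_singleton, ← Finset.mul_prod_erase s _ hi, mul_pow,
          ← mul_assoc, ← pow_succ', Nat.sub_add_cancel hq]
        refine Ideal.mul_mem_right _ _ (Ideal.subset_span ⟨_, ?_, rfl⟩)
        rw [hP]
        exact Ideal.subset_span ⟨_, ⟨i, hi, rfl⟩, rfl⟩
      exact Ideal.mem_colon_span_singleton.1 (h3 h)

theorem stmt9 {K : Type*} [Field K] {n : ℕ} (p : ℕ) (hp : p.Prime) [CharP K p]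
    (I : Ideal (MvPolynomial (Fin n) K)) (hgr : IsGraded I) (htop : I ≠ ⊤) (hbot : I ≠ ⊥)
    (hlin : ∀ 𝔭 ∈ Ass I, ∃ L : Set (MvPolynomial (Fin n) K),
      (∀ l ∈ L, MvPolynomial.IsHomogeneous l 1) ∧ 𝔭 = Ideal.span L)
    (q : ℕ) (hq : ∃ e : ℕ, q = p ^ e) (hq1 : 1 < q) :
    vnum (frobPow I q) ≤ q * vnum I + (q - 1) * bightI I := by
  classical
  obtain ⟨e, rfl⟩ := hq
  have hne : {d : ℕ | ∃ f : MvPolynomial (Fin n) K, f.IsHomogeneous d ∧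
    ∃ 𝔭 ∈ Ass I, I.colon (Ideal.span {f}) = 𝔭}.Nonempty := by
    have : Nontrivial (MvPolynomial (Fin n) K ⧸ I) := Ideal.Quotient.nontrivial_iff.2 htop
    obtain ⟨P, hP⟩ := associatedPrimes.nonempty (MvPolynomial (Fin n) K) (MvPolynomial (Fin n) K ⧸ I)
    obtain ⟨L, hL, hPL⟩ := hlin P hP
    obtain ⟨d, f, hf, hfP⟩ := exists_homog I P hgr hP L hL hPL
    exact ⟨d, f, hf, P, hP, hfP⟩
  obtain ⟨f, hf, P, hP, hfP⟩ := Nat.sInf_mem hne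
  change f.IsHomogeneous (vnum I) at hf
  obtain ⟨L, hL, hPL⟩ := hlin P hP
  have hprime := ((mem_Ass_iff I P).1 hP).1
  obtain ⟨k, w, hk, hw, hwg⟩ := linear_colon p hp e P L hL hPL
  have hcol : (frobPow I (p ^ e)).colon
      (Ideal.span {f ^ (p ^ e) * w} : Ideal (MvPolynomial (Fin n) K)) = P := by
    ext g
    rw [Ideal.mem_colon_span_singleton, ← hwg,
      show g * (f ^ (p ^ e) * w) = (g * w) * f ^ (p ^ e) by ring]
    constructor
    · intro h
      rw [← hfP]
      exact frobPow_colon p hp e I f _ h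
    · intro h
      have h1 : frobPow P (p ^ e) ≤ (frobPow I (p ^ e)).colon
          (Ideal.span {f ^ (p ^ e)} : Ideal (MvPolynomial (Fin n) K)) := by
        rw [frobPow, Ideal.span_le]
        rintro _ ⟨a, ha, rfl⟩
        rw [SetLike.mem_coe, Ideal.mem_colon_span_singleton, ← mul_pow]
        refine Ideal.subset_span ⟨a * f, ?_, rfl⟩
        rw [SetLike.mem_coe, ← Ideal.mem_colon_span_singleton, hfP]
        exact ha
      exact Ideal.mem_colon_span_singleton.1 (h1 h)
  have hle : vnum (frobPow I (p ^ e)) ≤ vnum I * p ^ e + (p ^ e - 1) * k :=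
    Nat.sInf_le ⟨f ^ (p ^ e) * w, (hf.pow _).mul hw, P,
      (mem_Ass_iff _ _).2 ⟨hprime, _, hcol⟩, hcol⟩
  refine hle.trans ?_
  rw [mul_comm (vnum I)]
  refine Nat.add_le_add_left (Nat.mul_le_mul_left _ ?_) _
  have hfin : (Ass I).Finite := associatedPrimes.finite _ _
  have hbdd : BddAbove {h : ℕ | ∃ 𝔭 ∈ Ass I, ∃ h𝔭 : 𝔭.IsPrime,
      Order.height (⟨𝔭, h𝔭⟩ : PrimeSpectrum (MvPolynomial (Fin n) K)) = (h : ℕ∞)} := by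
    refine ((hfin.image (fun Q => Q.height.toNat)).subset ?_).bddAbove
    rintro h ⟨Q, hQ, hQp, hh⟩
    refine ⟨Q, hQ, ?_⟩
    rw [← PrimeSpectrum.height_eq_orderHeight] at hh
    change Q.height.toNat = h
    rw [hh, ENat.toNat_coe]
  have hPtop : P.height ≠ ⊤ := Ideal.height_ne_top hprime.ne_top
  have hkP : k ≤ P.height.toNat := by
    rw [← ENat.coe_toNat hPtop] at hk
    exact_mod_cast hk
  refine hkP.trans (le_csSup hbdd ⟨P, hP, hprime, ?_⟩)
  rw [← PrimeSpectrum.height_eq_orderHeight, ENat.coe_toNat hPtop]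

end
end

section
/- Let S = K[x_1,…,x_n] be a standard graded polynomial ring over a field K of prime characteristic p, and let I ⊂ S be a proper nonzero unmixed monomial ideal. Then for all q = p^e > 1, v(I^{[q]}) = q·v(I) + (q−1)·height(I). -/
open MvPolynomial

attribute [local instance] MvPolynomial.gradedAlgebra

noncomputable section

variable {K : Type*} [Field K] {n : ℕ}

/-- A form of the monomial ideal property convenient for proofs. -/
def MonI (I : Ideal (MvPolynomial (Fin n) K)) : Prop :=
  ∀ f, f ∈ I ↔ ∀ m ∈ f.support, monomial m (1 : K) ∈ I

/-- `(I : x^a) = (x_i : i ∈ A)` combinatorially. -/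
def Soc (I : Ideal (MvPolynomial (Fin n) K)) (A : Finset (Fin n)) (a : Fin n →₀ ℕ) : Prop :=
  (∀ i ∈ A, monomial (a + Finsupp.single i 1) (1 : K) ∈ I) ∧
  (∀ c : Fin n →₀ ℕ, monomial (a + c) (1 : K) ∈ I → ∃ i ∈ A, c i ≠ 0)

/-- The monomial prime of a set of variables. -/
def PA (K : Type*) [Field K] {n : ℕ} (A : Finset (Fin n)) : Ideal (MvPolynomial (Fin n) K) :=
  Ideal.span (X '' (A : Set (Fin n)))

theorem mem_PA (A : Finset (Fin n)) (f : MvPolynomial (Fin n) K) :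
    f ∈ PA K A ↔ ∀ m ∈ f.support, ∃ i ∈ A, m i ≠ 0 := by
  unfold PA
  rw [mem_ideal_span_X_image]
  rfl

theorem mon_congr {I : Ideal (MvPolynomial (Fin n) K)} {a b : Fin n →₀ ℕ} (e : a = b)
    (h : monomial a (1 : K) ∈ I) : monomial b (1 : K) ∈ I := e ▸ h

theorem mon_up {I : Ideal (MvPolynomial (Fin n) K)} {a : Fin n →₀ ℕ} (b : Fin n →₀ ℕ)
    (h : monomial a (1 : K) ∈ I) : monomial (a + b) (1 : K) ∈ I := by
  have := I.mul_mem_right (monomial b (1 : K)) h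
  rwa [monomial_mul, one_mul] at this

theorem monI_of (s : Set (Fin n →₀ ℕ)) :
    MonI (Ideal.span ((fun a => monomial a (1 : K)) '' s)) := by
  intro f
  rw [mem_ideal_span_monomial_image]
  refine forall₂_congr fun m hm => ?_
  rw [mem_ideal_span_monomial_image]
  simp [support_monomial]

theorem mon_scalar {I : Ideal (MvPolynomial (Fin n) K)} {a : Fin n →₀ ℕ} (c : K)
    (h : monomial a (1 : K) ∈ I) : monomial a c ∈ I := by
  have := I.mul_mem_left (C c) h
  rwa [C_mul_monomial, mul_one] at this

theorem lead_mem {I P : Ideal (MvPolynomial (Fin n) K)} (hI : MonI I) (hP : P.IsPrime)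
    (k : ℕ) : ∀ f : MvPolynomial (Fin n) K, f.support.card ≤ k → (∀ g, g ∈ P ↔ g * f ∈ I) →
    ∀ g ∈ P, g ≠ 0 → monomial (MonomialOrder.lex.degree g) (1 : K) ∈ P := by
  induction k with
  | zero =>
    intro f hf hfP
    have : f = 0 := by simpa using hf
    subst this
    exact absurd ((Ideal.eq_top_iff_one P).2 ((hfP 1).2 (by simp))) hP.ne_top
  | succ k ih =>
    intro f hf hfP g hg hg0
    have hf0 : f ≠ 0 := by
      rintro rfl
      exact absurd ((Ideal.eq_top_iff_one P).2 ((hfP 1).2 (by simp))) hP.ne_top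
    by_contra hcon
    set t := monomial (MonomialOrder.lex.degree g) (1 : K) with ht
    set d := MonomialOrder.lex.degree f with hd
    have hlead : monomial (MonomialOrder.lex.degree g + d) (1 : K) ∈ I := by
      apply (hI _).1 ((hfP g).1 hg)
      rw [hd, ← MonomialOrder.degree_mul hg0 hf0]
      exact MonomialOrder.degree_mem_support (mul_ne_zero hg0 hf0)
    set f' := f - monomial d (f.coeff d) with hf'
    have hdm : d ∈ f.support := MonomialOrder.degree_mem_support hf0
    have hcard : f'.support.card ≤ k := by
      have hsub : f'.support ⊆ f.support.erase d := by
        intro m hm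
        rw [mem_support_iff, hf', coeff_sub, coeff_monomial] at hm
        rw [Finset.mem_erase, mem_support_iff]
        by_cases h : d = m
        · subst h; simp at hm
        · rw [if_neg h, sub_zero] at hm
          exact ⟨fun h' => h h'.symm, hm⟩
      have := Finset.card_le_card hsub
      rw [Finset.card_erase_of_mem hdm] at this
      omega
    have hcard2 : (t * f').support.card ≤ k := by
      have h1 := Finset.card_le_card (support_mul t f')
      have h2 : t.support = {MonomialOrder.lex.degree g} := by
        classical
        rw [ht, support_monomial, if_neg one_ne_zero]
      rw [h2] at h1
      have h3 := Finset.card_add_le (s := ({MonomialOrder.lex.degree g} : Finset (Fin n →₀ ℕ)))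
        (t := f'.support)
      simp only [Finset.card_singleton, one_mul] at h3
      exact (h1.trans h3).trans hcard
    have htd : t * monomial d (f.coeff d) ∈ I := by
      rw [ht, monomial_mul, one_mul]
      exact mon_scalar _ hlead
    have key : ∀ h : MvPolynomial (Fin n) K, h * t * f = h * (t * f') +
        h * (t * monomial d (f.coeff d)) := by
      intro h; rw [hf']; ring
    refine hcon (ih (t * f') hcard2 ?_ g hg hg0)
    intro h
    rw [← Ideal.add_mem_iff_left I (I.mul_mem_left h htd), ← key, ← hfP]
    constructor
    · exact fun hh => P.mul_mem_right _ hh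
    · exact fun hh => (hP.mem_or_mem hh).resolve_right hcon

theorem terms_mem {P : Ideal (MvPolynomial (Fin n) K)}
    (hP : ∀ g ∈ P, g ≠ 0 → monomial (MonomialOrder.lex.degree g) (1 : K) ∈ P) (k : ℕ) :
    ∀ g ∈ P, g.support.card ≤ k → ∀ m ∈ g.support, monomial m (1 : K) ∈ P := by
  induction k with
  | zero =>
    intro g hg hk m hm
    have : g = 0 := by simpa using hk
    subst this
    simp at hm
  | succ k ih =>
    intro g hg hk m hm
    have hg0 : g ≠ 0 := by rintro rfl; simp at hm
    have hl := hP g hg hg0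
    set d := MonomialOrder.lex.degree g with hd
    by_cases hmd : m = d
    · rwa [hmd]
    have hdm : d ∈ g.support := MonomialOrder.degree_mem_support hg0
    have hsub : (g - monomial d (g.coeff d)).support ⊆ g.support.erase d := by
      intro m hm
      rw [mem_support_iff, coeff_sub, coeff_monomial] at hm
      rw [Finset.mem_erase, mem_support_iff]
      by_cases h : d = m
      · subst h; simp at hm
      · rw [if_neg h, sub_zero] at hm
        exact ⟨fun h' => h h'.symm, hm⟩
    have hc := Finset.card_le_card hsub
    rw [Finset.card_erase_of_mem hdm] at hc
    refine ih (g - monomial d (g.coeff d)) (P.sub_mem hg (mon_scalar _ hl)) (by omega) m ?_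
    rw [mem_support_iff, coeff_sub, coeff_monomial, if_neg (Ne.symm hmd), sub_zero]
    exact mem_support_iff.1 hm

theorem X_of_monomial_mem {P : Ideal (MvPolynomial (Fin n) K)} (hP : P.IsPrime)
    (m : Fin n →₀ ℕ) (h : monomial m (1 : K) ∈ P) : ∃ i, (X i : MvPolynomial (Fin n) K) ∈ P ∧
      m i ≠ 0 := by
  rw [monomial_eq, C_1, one_mul, Finsupp.prod] at h
  obtain ⟨i, hi, h⟩ := (Ideal.IsPrime.prod_mem_iff (p := P)).1 h
  exact ⟨i, hP.mem_of_pow_mem _ h, Finsupp.mem_support_iff.1 hi⟩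

theorem exists_PA {I P : Ideal (MvPolynomial (Fin n) K)} (hI : MonI I) (hP : P.IsPrime)
    (f : MvPolynomial (Fin n) K) (hf : ∀ g, g ∈ P ↔ g * f ∈ I) :
    ∃ A, P = PA K A ∧ ∃ m ∈ f.support, Soc I A m := by
  classical
  have hlead := lead_mem hI hP _ f le_rfl hf
  let A : Finset (Fin n) := Finset.univ.filter fun i => (X i : MvPolynomial (Fin n) K) ∈ P
  have hA : ∀ i, i ∈ A ↔ (X i : MvPolynomial (Fin n) K) ∈ P := by simp [A]
  have hPA : P = PA K A := by
    apply le_antisymm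
    · intro g hg
      rw [mem_PA]
      intro m hm
      obtain ⟨i, h1, h2⟩ := X_of_monomial_mem hP m (terms_mem hlead _ g hg le_rfl m hm)
      exact ⟨i, (hA i).2 h1, h2⟩
    · unfold PA
      rw [Ideal.span_le]
      rintro _ ⟨i, hi, rfl⟩
      exact (hA i).1 hi
  refine ⟨A, hPA, ?_⟩
  have hfirst : ∀ m ∈ f.support, ∀ i ∈ A, monomial (m + Finsupp.single i 1) (1 : K) ∈ I := by
    intro m hm i hi
    apply (hI _).1 ((hf _).1 ((hA i).1 hi))
    rw [mul_comm, mem_support_iff, coeff_mul_X]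
    exact mem_support_iff.1 hm
  by_contra hcon
  push Not at hcon
  have : ∀ m : Fin n →₀ ℕ, ∃ c : Fin n →₀ ℕ, m ∈ f.support →
      monomial (m + c) (1 : K) ∈ I ∧ ∀ i ∈ A, c i = 0 := by
    intro m
    by_cases hm : m ∈ f.support
    · have h := hcon m hm
      unfold Soc at h
      rw [not_and] at h
      have h := h (hfirst m hm)
      push Not at h
      obtain ⟨c, hc⟩ := h
      exact ⟨c, fun _ => hc⟩
    · exact ⟨0, fun h => absurd h hm⟩
  choose c hc using this
  have hmem : monomial (∑ m ∈ f.support, c m) (1 : K) ∈ P := by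
    rw [hf, hI]
    intro m' hm'
    rw [mem_support_iff, coeff_monomial_mul'] at hm'
    split_ifs at hm' with hle
    · rw [one_mul] at hm'
      have hm := mem_support_iff.2 hm'
      set m := m' - ∑ m ∈ f.support, c m
      have e : m' = (m + c m) + ∑ x ∈ f.support.erase m, c x := by
        rw [add_assoc, Finset.add_sum_erase _ _ hm]
        exact (tsub_add_cancel_of_le hle).symm
      rw [e]
      exact mon_up _ (hc m hm).1
    · exact absurd rfl hm'
  rw [hPA, mem_PA] at hmem
  obtain ⟨i, hi, h⟩ := hmem (∑ m ∈ f.support, c m) (by simp [support_monomial])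
  apply h
  rw [Finsupp.finsetSum_apply]
  exact Finset.sum_eq_zero fun m hm => (hc m hm).2 i hi

theorem PA_isPrime (A : Finset (Fin n)) : (PA K A).IsPrime := by
  classical
  have hker : PA K A = RingHom.ker (aeval (R := K)
      (fun i => if i ∈ A then (0 : MvPolynomial (Fin n) K) else X i)) := by
    apply le_antisymm
    · unfold PA
      rw [Ideal.span_le]
      rintro _ ⟨i, hi, rfl⟩
      have : i ∈ A := hi
      simp [RingHom.mem_ker, this]
    · intro f hf
      have key : ∀ g : MvPolynomial (Fin n) K, g - aeval (R := K)
        (fun i => if i ∈ A then (0 : MvPolynomial (Fin n) K) else X i) g ∈ PA K A := by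
        intro g
        induction g using MvPolynomial.induction_on with
        | C a => simp
        | add p q hp hq =>
          rw [map_add, add_sub_add_comm]
          exact Ideal.add_mem _ hp hq
        | mul_X p i hp =>
          rw [map_mul, aeval_X]
          split_ifs with h
          · rw [mul_zero, sub_zero]
            exact Ideal.mul_mem_left _ _ (Ideal.subset_span ⟨i, h, rfl⟩)
          · rw [← sub_mul]
            exact Ideal.mul_mem_right _ _ hp
      have := key f
      rw [RingHom.mem_ker] at hf
      rwa [hf, sub_zero] at this
  rw [hker]
  exact RingHom.ker_isPrime _

theorem soc_colon {I : Ideal (MvPolynomial (Fin n) K)} (hI : MonI I) {A : Finset (Fin n)}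
    {a : Fin n →₀ ℕ} (h : Soc I A a) (g : MvPolynomial (Fin n) K) :
    g ∈ PA K A ↔ g * monomial a (1 : K) ∈ I := by
  rw [mem_PA, hI]
  constructor
  · intro hg m hm
    rw [mem_support_iff, coeff_mul_monomial'] at hm
    split_ifs at hm with hle
    · rw [mul_one] at hm
      obtain ⟨i, hi, h0⟩ := hg _ (mem_support_iff.2 hm)
      have h1 : Finsupp.single i 1 ≤ m - a := by
        rw [Finsupp.single_le_iff]; omega
      have e : m = (a + Finsupp.single i 1) + (m - a - Finsupp.single i 1) := by
        rw [add_assoc, add_tsub_cancel_of_le h1, add_tsub_cancel_of_le hle]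
      rw [e]
      exact mon_up _ (h.1 i hi)
    · exact absurd rfl hm
  · intro hg m hm
    apply h.2
    apply hg
    rw [add_comm, mem_support_iff, coeff_mul_monomial, mul_one]
    exact mem_support_iff.1 hm

theorem mem_Ass_iff_s11 (I P : Ideal (MvPolynomial (Fin n) K)) :
    P ∈ Ass I ↔ P.IsPrime ∧ ∃ f, ∀ g, g ∈ P ↔ g * f ∈ I := by
  unfold Ass
  rw [AssociatedPrimes.mem_iff, isAssociatedPrime_iff]
  refine and_congr_right fun _ => ?_
  have aux : ∀ f g : MvPolynomial (Fin n) K,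
      g ∈ (⊥ : Submodule (MvPolynomial (Fin n) K) (MvPolynomial (Fin n) K ⧸ I)).colon
        {Ideal.Quotient.mk I f} ↔ g * f ∈ I := by
    intro f g
    rw [Submodule.mem_colon_singleton, Submodule.mem_bot, ← Ideal.Quotient.eq_zero_iff_mem]
    rfl
  constructor
  · rintro ⟨x, hx⟩
    obtain ⟨f, rfl⟩ := Ideal.Quotient.mk_surjective x
    exact ⟨f, fun g => by rw [hx, aux]⟩
  · rintro ⟨f, hf⟩
    exact ⟨Ideal.Quotient.mk I f, by ext g; rw [hf, aux]⟩

theorem Ass_iff {I : Ideal (MvPolynomial (Fin n) K)} (hI : MonI I)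
    (P : Ideal (MvPolynomial (Fin n) K)) : P ∈ Ass I ↔ ∃ A, P = PA K A ∧ ∃ a, Soc I A a := by
  rw [mem_Ass_iff_s11]
  constructor
  · rintro ⟨hP, f, hf⟩
    obtain ⟨A, h1, m, -, h2⟩ := exists_PA hI hP f hf
    exact ⟨A, h1, m, h2⟩
  · rintro ⟨A, rfl, a, h⟩
    exact ⟨PA_isPrime A, _, soc_colon hI h⟩

theorem vnum_eq {I : Ideal (MvPolynomial (Fin n) K)} (hI : MonI I) :
    vnum I = sInf {d | ∃ A a, Soc I A a ∧ a.degree = d} := by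
  unfold vnum
  congr 1
  ext d
  constructor
  · rintro ⟨f, hfd, P, hP, hcol⟩
    obtain ⟨A, h1, m, hm, h2⟩ := exists_PA hI ((mem_Ass_iff_s11 _ _).1 hP).1 f
      (fun g => by rw [← hcol, Ideal.mem_colon_span_singleton])
    refine ⟨A, m, h2, ?_⟩
    have := hfd (mem_support_iff.1 hm)
    rw [← this, Finsupp.degree_eq_weight_one]
    rfl
  · rintro ⟨A, a, h, rfl⟩
    refine ⟨monomial a 1, isHomogeneous_monomial _ rfl, PA K A, (Ass_iff hI _).2 ⟨A, rfl, a, h⟩, ?_⟩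
    ext g
    rw [Ideal.mem_colon_span_singleton, soc_colon hI h]

theorem height_PA (A : Finset (Fin n)) : (PA K A).height = A.card := by
  classical
  apply le_antisymm
  · have := PA_isPrime (K := K) A
    have h := Ideal.height_le_card_of_mem_minimalPrimes_span_finset (p := PA K A)
      (s := A.image (X : Fin n → MvPolynomial (Fin n) K)) (by
        rw [Finset.coe_image]
        change PA K A ∈ (PA K A).minimalPrimes
        rw [Ideal.minimalPrimes_eq_subsingleton_self]
        rfl)
    exact h.trans (by exact_mod_cast Finset.card_image_le)
  · induction A using Finset.induction_on with
    | empty => simp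
    | insert i A hi ih =>
      rw [Finset.card_insert_of_notMem hi]
      have := PA_isPrime (K := K) A
      have := PA_isPrime (K := K) (insert i A)
      have hlt : PA K A < PA K (insert i A) := by
        refine lt_of_le_of_ne (Ideal.span_mono (Set.image_mono (by simp))) ?_
        intro he
        have hx : (X i : MvPolynomial (Fin n) K) ∈ PA K (insert i A) :=
          Ideal.subset_span ⟨i, by simp, rfl⟩
        rw [← he, mem_PA] at hx
        obtain ⟨j, hj, h⟩ := hx (Finsupp.single i 1) (by simp [support_X])
        rw [Finsupp.single_apply] at h
        split_ifs at h with hij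
        · exact hi (hij ▸ hj)
        · exact h rfl
      have h := Ideal.height_add_one_le_of_lt_of_isPrime hlt
      refine le_trans ?_ h
      push_cast
      gcongr

theorem height_set {I : Ideal (MvPolynomial (Fin n) K)} (hI : MonI I) :
    {h : ℕ | ∃ 𝔭 ∈ Ass I, ∃ h𝔭 : 𝔭.IsPrime,
    Order.height (⟨𝔭, h𝔭⟩ : PrimeSpectrum (MvPolynomial (Fin n) K)) = (h : ℕ∞)} =
    {h | ∃ A a, Soc I A a ∧ A.card = h} := by
  have hh : ∀ A (hA : (PA K A).IsPrime), Order.height (⟨PA K A, hA⟩ :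
      PrimeSpectrum (MvPolynomial (Fin n) K)) = A.card := by
    intro A hA
    rw [← height_PA (K := K) A]
    exact (PrimeSpectrum.height_eq_orderHeight _).symm
  ext h
  constructor
  · rintro ⟨P, hP, hP', hh'⟩
    obtain ⟨A, rfl, a, ha⟩ := (Ass_iff hI _).1 hP
    rw [hh] at hh'
    exact ⟨A, a, ha, by exact_mod_cast hh'⟩
  · rintro ⟨A, a, ha, rfl⟩
    exact ⟨PA K A, (Ass_iff hI _).2 ⟨A, rfl, a, ha⟩, PA_isPrime A, hh A _⟩

theorem exists_soc {I : Ideal (MvPolynomial (Fin n) K)} (hI : MonI I) (htop : I ≠ ⊤) :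
    ∃ A a, Soc I A a := by
  have : Nontrivial (MvPolynomial (Fin n) K ⧸ I) := Ideal.Quotient.nontrivial_iff.2 htop
  obtain ⟨P, hP⟩ := associatedPrimes.nonempty (MvPolynomial (Fin n) K) (MvPolynomial (Fin n) K ⧸ I)
  obtain ⟨A, -, a, h⟩ := (Ass_iff hI P).1 hP
  exact ⟨A, a, h⟩

theorem card_eq {I : Ideal (MvPolynomial (Fin n) K)} (hI : MonI I)
    (hunm : heightI I = bightI I) {A : Finset (Fin n)} {a : Fin n →₀ ℕ} (h : Soc I A a) :
    A.card = heightI I := by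
  have hmem : A.card ∈ {h | ∃ A a, Soc I A a ∧ A.card = h} := ⟨A, a, h, rfl⟩
  have hb : BddAbove {h | ∃ A a, Soc I A a ∧ A.card = h} := by
    refine ⟨n, ?_⟩
    rintro _ ⟨A, a, -, rfl⟩
    simpa using Finset.card_le_univ A
  apply le_antisymm
  · rw [hunm]
    unfold bightI
    rw [height_set hI]
    exact le_csSup hb hmem
  · unfold heightI
    rw [height_set hI]
    exact Nat.sInf_le hmem

/-- Coordinatewise floor division. -/
def fdiv (q : ℕ) (c : Fin n →₀ ℕ) : Fin n →₀ ℕ := c.mapRange (· / q) (Nat.zero_div q)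

theorem frob_eq (p : ℕ) (hp : p.Prime) [CharP K p] {I : Ideal (MvPolynomial (Fin n) K)}
    (hI : MonI I) (e : ℕ) : frobPow I (p ^ e) = Ideal.span ((fun a => monomial a (1 : K)) ''
      ((fun a => p ^ e • a) '' {a | monomial a (1 : K) ∈ I})) := by
  have : Fact p.Prime := ⟨hp⟩
  apply le_antisymm
  · unfold frobPow
    rw [Ideal.span_le]
    rintro _ ⟨f, hf, rfl⟩
    have hf' := (hI f).1 hf
    have e1 : f ^ p ^ e = ∑ m ∈ f.support, monomial (p ^ e • m) ((f.coeff m) ^ p ^ e) := by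
      conv_lhs => rw [f.as_sum]
      rw [sum_pow_char_pow]
      exact Finset.sum_congr rfl fun m _ => monomial_pow
    change f ^ p ^ e ∈ _
    rw [e1]
    refine Ideal.sum_mem _ fun m hm => mon_scalar _ (Ideal.subset_span ?_)
    exact ⟨_, ⟨m, hf' m hm, rfl⟩, rfl⟩
  · rw [Ideal.span_le]
    rintro _ ⟨_, ⟨a, ha, rfl⟩, rfl⟩
    refine Ideal.subset_span ⟨monomial a 1, ha, ?_⟩
    simp [monomial_pow]

theorem frob_mon (p : ℕ) (hp : p.Prime) [CharP K p] {I : Ideal (MvPolynomial (Fin n) K)}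
    (hI : MonI I) (e : ℕ) (c : Fin n →₀ ℕ) :
    monomial c (1 : K) ∈ frobPow I (p ^ e) ↔ monomial (fdiv (p ^ e) c) (1 : K) ∈ I := by
  have hq : 0 < p ^ e := pow_pos hp.pos e
  rw [frob_eq p hp hI, mem_ideal_span_monomial_image]
  have : (monomial c (1 : K)).support = {c} := by
    classical
    rw [support_monomial, if_neg one_ne_zero]
  rw [this]
  simp only [Finset.mem_singleton, forall_eq, Set.exists_mem_image, Set.mem_ofPred_eq]
  constructor
  · rintro ⟨a, ha, hle⟩
    have hle' : a ≤ fdiv (p ^ e) c := by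
      intro i
      have := hle i
      simp only [fdiv, Finsupp.mapRange_apply]
      rw [Nat.le_div_iff_mul_le hq, mul_comm]
      simpa using this
    rw [← add_tsub_cancel_of_le hle']
    exact mon_up _ ha
  · intro h
    refine ⟨_, h, fun i => ?_⟩
    simpa [fdiv] using Nat.mul_div_le (c i) (p ^ e)

theorem soc_down {I J : Ideal (MvPolynomial (Fin n) K)} {q : ℕ} (hq : 0 < q)
    (hJ : ∀ c, monomial c (1 : K) ∈ J ↔ monomial (fdiv q c) (1 : K) ∈ I)
    {A : Finset (Fin n)} {b : Fin n →₀ ℕ} (h : Soc J A b) :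
    Soc I A (fdiv q b) ∧ q * (fdiv q b).degree + (q - 1) * A.card ≤ b.degree := by
  have h0 : monomial (fdiv q b) (1 : K) ∉ I := by
    intro hc
    rw [← hJ] at hc
    obtain ⟨i, -, hi⟩ := h.2 0 (by simpa using hc)
    exact hi rfl
  have hne : ∀ i ∈ A, (b i + 1) / q ≠ b i / q := by
    intro i hi he
    have h1 := (hJ _).1 (h.1 i hi)
    apply h0
    refine mon_congr ?_ h1
    ext j
    simp only [fdiv, Finsupp.mapRange_apply, Finsupp.add_apply, Finsupp.single_apply]
    split_ifs with hij
    · subst hij; exact he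
    · rfl
  have hdvd : ∀ i ∈ A, q ∣ b i + 1 := by
    intro i hi
    by_contra hd
    exact hne i hi (Nat.succ_div_of_not_dvd hd)
  have hmod : ∀ i ∈ A, b i = q * (b i / q) + (q - 1) := by
    intro i hi
    have h1 := Nat.succ_div_of_dvd (hdvd i hi)
    have h2 := Nat.mul_div_cancel' (hdvd i hi)
    rw [h1, mul_add, mul_one] at h2
    omega
  refine ⟨⟨fun i hi => ?_, fun c hc => ?_⟩, ?_⟩
  · have h1 := (hJ _).1 (h.1 i hi)
    refine mon_congr ?_ h1
    ext j
    simp only [fdiv, Finsupp.mapRange_apply, Finsupp.add_apply, Finsupp.single_apply]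
    split_ifs with hij
    · subst hij
      exact Nat.succ_div_of_dvd (hdvd i hi)
    · rfl
  · obtain ⟨i, hi, h1⟩ := h.2 (q • c) (by
      rw [hJ]
      refine mon_congr ?_ hc
      ext j
      simp [fdiv, Nat.add_mul_div_left _ _ hq])
    refine ⟨i, hi, fun h2 => h1 ?_⟩
    simp [h2]
  · classical
    rw [Finsupp.degree_eq_sum, Finsupp.degree_eq_sum, Finset.mul_sum]
    have e1 : (q - 1) * A.card = ∑ i, if i ∈ A then q - 1 else 0 := by
      rw [Finset.sum_ite_mem, Finset.univ_inter, Finset.sum_const, smul_eq_mul, mul_comm]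
    rw [e1, ← Finset.sum_add_distrib]
    apply Finset.sum_le_sum
    intro i _
    simp only [fdiv, Finsupp.mapRange_apply]
    split_ifs with hi
    · exact (hmod i hi).ge
    · simpa using Nat.mul_div_le (b i) q

theorem soc_up {I J : Ideal (MvPolynomial (Fin n) K)} {q : ℕ} (hq : 0 < q)
    (hJ : ∀ c, monomial c (1 : K) ∈ J ↔ monomial (fdiv q c) (1 : K) ∈ I)
    {A : Finset (Fin n)} {a : Fin n →₀ ℕ} (h : Soc I A a) :
    ∃ b, Soc J A b ∧ b.degree = q * a.degree + (q - 1) * A.card := by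
  classical
  let b : Fin n →₀ ℕ := Finsupp.equivFunOnFinite.symm
    fun i => q * a i + if i ∈ A then q - 1 else 0
  have hb : ∀ i, b i = q * a i + if i ∈ A then q - 1 else 0 := fun i => rfl
  have hlt : ∀ i, (if i ∈ A then q - 1 else 0) < q := by
    intro i; split_ifs <;> omega
  refine ⟨b, ⟨fun i hi => ?_, fun c hc => ?_⟩, ?_⟩
  · rw [hJ]
    refine mon_congr ?_ (h.1 i hi)
    ext j
    simp only [fdiv, Finsupp.mapRange_apply, Finsupp.add_apply, Finsupp.single_apply, hb]
    split_ifs with h1 h2 h2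
    · rw [add_assoc, Nat.sub_add_cancel hq, Nat.mul_add_div hq, Nat.div_self hq]
    · exact absurd (h1 ▸ hi) h2
    · rw [add_assoc, Nat.mul_add_div hq, Nat.div_eq_of_lt (by omega)]
    · rw [add_assoc, Nat.mul_add_div hq, Nat.div_eq_of_lt (by omega)]
  · by_contra hcon
    push Not at hcon
    rw [hJ] at hc
    have e : fdiv q (b + c) = a + fdiv q c := by
      ext j
      simp only [fdiv, Finsupp.mapRange_apply, Finsupp.add_apply, hb]
      rw [add_assoc, Nat.mul_add_div hq]
      split_ifs with h1
      · rw [hcon j h1, Nat.zero_div, Nat.add_zero, Nat.div_eq_of_lt (by omega)]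
      · rw [zero_add]
    rw [e] at hc
    obtain ⟨i, hi, h1⟩ := h.2 _ hc
    apply h1
    simp [fdiv, hcon i hi]
  · rw [Finsupp.degree_eq_sum, Finsupp.degree_eq_sum, Finset.mul_sum]
    simp only [hb]
    rw [Finset.sum_add_distrib, Finset.sum_ite_mem, Finset.univ_inter, Finset.sum_const,
      smul_eq_mul, mul_comm A.card]

theorem stmt11 {K : Type*} [Field K] {n : ℕ} (p : ℕ) (hp : p.Prime) [CharP K p]
    (I : Ideal (MvPolynomial (Fin n) K)) (hmon : IsMonomialIdeal I) (htop : I ≠ ⊤) (hbot : I ≠ ⊥)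
    (hunm : heightI I = bightI I)
    (q : ℕ) (hq : ∃ e : ℕ, q = p ^ e) (hq1 : 1 < q) :
    vnum (frobPow I q) = q * vnum I + (q - 1) * heightI I := by
  have hI : MonI I := by
    obtain ⟨s, rfl⟩ := hmon
    exact monI_of s
  have hq0 : 0 < q := by omega
  obtain ⟨e, rfl⟩ := hq
  have hJ : MonI (frobPow I (p ^ e)) := by
    rw [frob_eq p hp hI]
    exact monI_of _
  have hfl := frob_mon p hp hI e
  have hne : {d | ∃ A a, Soc I A a ∧ a.degree = d}.Nonempty := by
    obtain ⟨A, a, h⟩ := exists_soc hI htop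
    exact ⟨_, A, a, h, rfl⟩
  rw [vnum_eq hI, vnum_eq hJ]
  obtain ⟨A, a, ha, had⟩ := Nat.sInf_mem hne
  obtain ⟨b, hb, hbd⟩ := soc_up hq0 hfl ha
  rw [had, card_eq hI hunm ha] at hbd
  apply le_antisymm
  · exact Nat.sInf_le ⟨A, b, hb, hbd⟩
  · refine le_csInf ⟨_, A, b, hb, rfl⟩ ?_
    rintro _ ⟨A', b', hb', rfl⟩
    obtain ⟨h1, h2⟩ := soc_down hq0 hfl hb'
    rw [card_eq hI hunm h1] at h2
    refine le_trans ?_ h2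
    gcongr
    exact Nat.sInf_le ⟨A', _, h1, rfl⟩

end
end
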